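/- Let p be a prime, let K be an algebraic closure of the field with p elements, let Y be an integral scheme of finite type over K, and let f : Y → Y be a dominant morphism of schemes over K, i.e. the set-theoretic image of f is dense in the underlying topological space of Y. Then the set of f-periodic closed points, namely {y ∈ Y : y is a closed point and f^b(y) = y for some integer b ≥ 1, where f^b denotes the b-fold iterate of the underlying map of f}, is dense in the underlying topological space of Y. -/

import Mathlib

namespace PerDense

lemma exists_idem_pow {M : Type*} [Monoid M] [Finite M] (x : M) :
    ∃ N : ℕ, 1 ≤ N ∧ x ^ N * x ^ N = x ^ N := by
  obtain ⟨a, b, hab, h⟩ := Finite.exists_ne_map_eq_of_infinite (fun n : ℕ => x ^ n)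
  wlog hlt : a < b generalizing a b
  · exact this b a hab.symm h.symm (by omega)
  obtain ⟨d, rfl⟩ := Nat.exists_eq_add_of_lt hlt
  have h1 : ∀ m, a ≤ m → x ^ (m + (d + 1)) = x ^ m := by
    intro m hm
    obtain ⟨c, rfl⟩ := Nat.exists_eq_add_of_le hm
    have : a + c + (d + 1) = (a + d + 1) + c := by ring
    rw [this, pow_add, pow_add x a c]
    exact congrArg (· * x ^ c) h.symm
  have h2 : ∀ t m, a ≤ m → x ^ (m + t * (d + 1)) = x ^ m := by
    intro t
    induction t with
    | zero => simp
    | succ t ih =>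
      intro m hm
      have : m + (t + 1) * (d + 1) = (m + t * (d+1)) + (d + 1) := by ring
      rw [this, h1 _ (by omega), ih _ hm]
  refine ⟨(a + 1) * (d + 1), Nat.mul_pos (by omega) (by omega), ?_⟩
  rw [← pow_add]
  apply h2
  nlinarith

/-- irreducible nonunital case, in the ambient space `V` -/
lemma exists_trace_ne_zero_aux {k V : Type*} [Field k] [Finite k] [AddCommGroup V] [Module k V]
    [Module.Finite k V] (V₁ : Submodule k V) (J : Submodule k (Module.End k V))
    (hmul : ∀ x ∈ J, ∀ y ∈ J, x * y ∈ J)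
    (hJV : ∀ x ∈ J, ∀ v, x v ∈ V₁)
    (hne : V₁ ≠ ⊥)
    (htr : ∀ v ∈ V₁, v ≠ 0 → ∀ w ∈ V₁, ∃ x ∈ J, x v = w) :
    ∃ x ∈ J, LinearMap.trace k V x ≠ 0 := by
  classical
  have : Finite V := Module.finite_of_finite k
  have : Finite (Module.End k V) := Finite.of_injective (fun f : Module.End k V => (f : V → V)) DFunLike.coe_injective
  obtain ⟨v₀, hv₀, hv₀n⟩ := (Submodule.ne_bot_iff _).1 hne
  let good : Set (Module.End k V) := {x | x ∈ J ∧ V₁.map x ≠ ⊥}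
  have hgood : good.Nonempty := by
    obtain ⟨x, hx, hxv⟩ := htr v₀ hv₀ hv₀n v₀ hv₀
    exact ⟨x, hx, (Submodule.ne_bot_iff _).2 ⟨v₀, ⟨v₀, hv₀, hxv⟩, hv₀n⟩⟩
  obtain ⟨r, ⟨hrJ, hrne⟩, hrmin⟩ := Set.exists_min_image good
    (fun x => Module.finrank k (V₁.map x)) (Set.toFinite _) hgood
  obtain ⟨w, ⟨v, hv, rfl⟩, hw⟩ := (Submodule.ne_bot_iff _).1 hrne
  have hv0 : v ≠ 0 := by rintro rfl; simp at hw
  obtain ⟨s, hsJ, hsv⟩ := htr (r v) (hJV r hrJ v) hw v hv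
  set x := s * r with hx
  have hxJ : x ∈ J := hmul _ hsJ _ hrJ
  have hxv : x v = v := by simp [hx, hsv]
  obtain ⟨N, hN, hidem⟩ := exists_idem_pow x
  set e := x ^ N with he
  have hpow : ∀ m, x ^ (m + 1) ∈ J ∧ (x ^ (m + 1)) v = v ∧
      Module.finrank k (V₁.map (x ^ (m + 1))) ≤ Module.finrank k (V₁.map r) := by
    intro m
    induction m with
    | zero =>
      refine ⟨by simpa using hxJ, by simpa using hxv, ?_⟩
      have h0 : V₁.map (s * r) = (V₁.map r).map s := by
        rw [Module.End.mul_eq_comp, Submodule.map_comp]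
      rw [hx, zero_add, pow_one, h0]
      exact Submodule.finrank_map_le _ _
    | succ m ih =>
      rw [pow_succ']
      refine ⟨hmul _ hxJ _ ih.1, by rw [Module.End.mul_apply, ih.2.1, hxv], ?_⟩
      rw [Module.End.mul_eq_comp, Submodule.map_comp]
      exact (Submodule.finrank_map_le _ _).trans ih.2.2
  obtain ⟨heJ, hev, heR⟩ : e ∈ J ∧ e v = v ∧
      Module.finrank k (V₁.map e) ≤ Module.finrank k (V₁.map r) := by
    have := hpow (N - 1)
    rwa [Nat.sub_add_cancel hN] at this
  set U := V₁.map e with hU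
  have hUV : U ≤ V₁ := by
    rintro _ ⟨a, ha, rfl⟩
    exact hJV e heJ a
  have heU : ∀ u ∈ U, e u = u := by
    rintro _ ⟨a, ha, rfl⟩
    rw [← Module.End.mul_apply, hidem]
  have heinU : ∀ a ∈ V₁, e a ∈ U := fun a ha => ⟨a, ha, rfl⟩
  have hvU : v ∈ U := ⟨v, hv, hev⟩
  have : Finite (Module.End k U) := Finite.of_injective
    (fun f : Module.End k U => (f : U → U)) DFunLike.coe_injective
  let H : Subalgebra k (Module.End k U) :=
    { carrier := {h | ∃ z ∈ J, ∀ u : U, (h u : V) = e (z u)}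
      mul_mem' := by
        rintro h₁ h₂ ⟨z₁, hz₁, h1⟩ ⟨z₂, hz₂, h2⟩
        refine ⟨z₁ * (e * z₂), hmul _ hz₁ _ (hmul _ heJ _ hz₂), fun u => ?_⟩
        rw [Module.End.mul_apply, h1, h2]; rfl
      add_mem' := by
        rintro h₁ h₂ ⟨z₁, hz₁, h1⟩ ⟨z₂, hz₂, h2⟩
        refine ⟨z₁ + z₂, J.add_mem hz₁ hz₂, fun u => ?_⟩
        simp [h1, h2]
      algebraMap_mem' := by
        intro c
        refine ⟨c • e, J.smul_mem _ heJ, fun u => ?_⟩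
        simp [heU u u.2, Module.algebraMap_end_apply] }
  have hsurj : ∀ h ∈ H, h ≠ 0 → Function.Surjective h := by
    rintro h ⟨z, hz, hh⟩ hn
    have hy : e * (z * e) ∈ J := hmul _ heJ _ (hmul _ hz _ heJ)
    obtain ⟨u, hu⟩ : ∃ u, h u ≠ 0 := by
      by_contra hc
      push Not at hc
      exact hn (LinearMap.ext hc)
    have hmapne : V₁.map (e * (z * e)) ≠ ⊥ := by
      refine (Submodule.ne_bot_iff _).2 ⟨(h u : V), ⟨u, hUV u.2, ?_⟩, by simpa using hu⟩
      simp [hh, heU u u.2]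
    have h1 := hrmin _ ⟨hy, hmapne⟩
    have hle : V₁.map (e * (z * e)) ≤ U := by
      rintro _ ⟨a, ha, rfl⟩
      exact heinU _ (hJV z hz _)
    have heq : V₁.map (e * (z * e)) = U :=
      Submodule.eq_of_le_of_finrank_le hle (heR.trans h1)
    intro t
    obtain ⟨a, ha, hat⟩ : (t : V) ∈ V₁.map (e * (z * e)) := by rw [heq]; exact t.2
    refine ⟨⟨e a, heinU a ha⟩, ?_⟩
    apply Subtype.ext
    rw [hh, ← hat]; rfl
  have hinj : ∀ h ∈ H, h ≠ 0 → Function.Injective h := fun h hh hn =>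
    (LinearMap.injective_iff_surjective).2 (hsurj h hh hn)
  have : Nontrivial U := ⟨⟨⟨v, hvU⟩, 0, by simpa [Subtype.ext_iff] using hv0⟩⟩
  have : NoZeroDivisors H := ⟨by
    rintro ⟨a, ha⟩ ⟨b, hb⟩ hab
    by_contra hc
    push Not at hc
    have hb' : b ≠ 0 := fun h => hc.2 (Subtype.ext h)
    apply hc.1
    apply Subtype.ext
    apply LinearMap.ext
    intro u
    obtain ⟨t, rfl⟩ := hsurj b hb hb' u
    have := congrArg (fun y : H => (y : Module.End k U) t) hab
    simpa using this⟩
  have : IsDomain H := NoZeroDivisors.to_isDomain H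
  letI : Field H := (Finite.isDomain_to_isField H).toField
  let Φ₀ : H →ₗ[k] U :=
    { toFun := fun h => (h : Module.End k U) ⟨v, hvU⟩
      map_add' := fun _ _ => rfl
      map_smul' := fun _ _ => rfl }
  have hbij : Function.Bijective Φ₀ := by
    constructor
    · rw [injective_iff_map_eq_zero]
      rintro ⟨h, hh⟩ h0
      by_contra hn
      have hn' : h ≠ 0 := fun h' => hn (Subtype.ext h')
      have := hinj h hh hn' (a₁ := ⟨v, hvU⟩) (a₂ := 0) (by rw [map_zero]; exact h0)
      exact hv0 (by simpa [Subtype.ext_iff] using this)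
    · intro u
      obtain ⟨z, hz, hzv⟩ := htr v hv hv0 u (hUV u.2)
      have hst : ∀ a ∈ U, (e * z) a ∈ U := fun a ha => heinU _ (hJV z hz _)
      refine ⟨⟨(e * z).restrict hst, z, hz, fun a => rfl⟩, ?_⟩
      apply Subtype.ext
      change e (z v) = u
      rw [hzv, heU _ u.2]
  let Φ := LinearEquiv.ofBijective Φ₀ hbij
  obtain ⟨h, hh⟩ := Algebra.trace_surjective k H 1
  have htrh : LinearMap.trace k U (h : Module.End k U) = 1 := by
    rw [← hh, Algebra.trace_apply, ← LinearMap.trace_conj' _ Φ]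
    congr 1
    apply LinearMap.ext
    intro u
    obtain ⟨g, rfl⟩ := Φ.surjective u
    rw [LinearEquiv.conj_apply]
    simp
    rfl
  obtain ⟨z, hz, hhz⟩ := h.2
  refine ⟨e * (z * e), hmul _ heJ _ (hmul _ hz _ heJ), ?_⟩
  have hVV : ∀ a, (e * (z * e)) (e a) ∈ U := fun a => heinU _ (hJV z hz _)
  have hcyc : LinearMap.trace k V (e * (z * e)) = LinearMap.trace k V ((e * (z * e)) * e) := by
    rw [mul_assoc, mul_assoc, hidem]
  have hall : ∀ a, (e * (z * e)) a ∈ U := fun a => heinU _ (hJV z hz _)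
  rw [← LinearMap.trace_restrict_eq_of_forall_mem U (e * (z * e)) hall (fun a _ => hall a)]
  have : (e * (z * e)).restrict (fun a (_ : a ∈ U) => hall a) = (h : Module.End k U) := by
    apply LinearMap.ext
    intro u
    apply Subtype.ext
    rw [hhz, LinearMap.restrict_apply]
    simp [heU u u.2]
  rw [this, htrh]
  exact one_ne_zero

lemma exists_trace_ne_zero {k V : Type*} [Field k] [Finite k] [AddCommGroup V] [Module k V]
    [Module.Finite k V] [Nontrivial V] (S : Set (Module.End k V))
    (hS : ∀ v : V, v ≠ 0 →
      Module.finrank k V < 2 * Module.finrank k (Submodule.span k ((fun s : Module.End k V => s v) '' S))) :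
    ∃ x ∈ Subsemigroup.closure S, LinearMap.trace k V x ≠ 0 := by
  classical
  have : Finite V := Module.finite_of_finite k
  set R := NonUnitalAlgebra.adjoin k S with hR
  suffices h : ∃ x ∈ R, LinearMap.trace k V x ≠ 0 by
    by_contra hc
    push Not at hc
    obtain ⟨x, hx, hxt⟩ := h
    have hx' : x ∈ Submodule.span k (Subsemigroup.closure S : Set (Module.End k V)) := by
      rw [← NonUnitalAlgebra.adjoin_eq_span]; exact hx
    have hle : Submodule.span k (Subsemigroup.closure S : Set (Module.End k V)) ≤
        LinearMap.ker (LinearMap.trace k V) := Submodule.span_le.2 (fun y hy => hc y hy)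
    exact hxt (hle hx')
  let stab : Set (Submodule k V) := {W | W ≠ ⊥ ∧ ∀ s ∈ S, ∀ w ∈ W, s w ∈ W}
  have hst : stab.Nonempty := ⟨⊤, top_ne_bot, by simp⟩
  have : Finite (Submodule k V) := Finite.of_injective (fun W : Submodule k V => (W : Set V)) SetLike.coe_injective
  obtain ⟨V₁, ⟨hV₁n, hV₁s⟩, hV₁m⟩ := Set.exists_min_image stab
    (fun x => Module.finrank k x) (Set.toFinite _) hst
  have hRst : ∀ r ∈ R, ∀ w ∈ V₁, r w ∈ V₁ := by
    intro r hr
    induction hr using NonUnitalAlgebra.adjoin_induction with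
    | mem x hx => exact hV₁s x hx
    | add x y _ _ hx hy => exact fun w hw => V₁.add_mem (hx w hw) (hy w hw)
    | zero => exact fun w hw => V₁.zero_mem
    | mul x y _ _ hx hy => exact fun w hw => hx _ (hy w hw)
    | smul c x _ hx => exact fun w hw => V₁.smul_mem _ (hx w hw)
  have hSR : ∀ s ∈ S, s ∈ R := fun s hs => NonUnitalAlgebra.subset_adjoin k hs
  obtain ⟨v₀, hv₀, hv₀n⟩ := (Submodule.ne_bot_iff _).1 hV₁n
  have hdim : Module.finrank k V < 2 * Module.finrank k V₁ := by
    refine (hS v₀ hv₀n).trans_le ?_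
    gcongr
    apply Submodule.finrank_mono
    rw [Submodule.span_le]
    rintro _ ⟨s, hs, rfl⟩
    exact hV₁s s hs _ hv₀
  have hbig : ∀ W : Submodule k V, W ≤ V₁ → W ≠ ⊥ → (∀ s ∈ S, ∀ w ∈ W, s w ∈ W) → W = V₁ := by
    intro W hW hWn hWs
    exact Submodule.eq_of_le_of_finrank_le hW (hV₁m W ⟨hWn, hWs⟩)
  let Ls : Finset V → Submodule k (Module.End k V) := fun t =>
    { carrier := {r | r ∈ R ∧ ∀ u ∈ t, r u ∈ V₁}
      add_mem' := fun {a b} ha hb => ⟨R.add_mem ha.1 hb.1, fun u hu => V₁.add_mem (ha.2 u hu) (hb.2 u hu)⟩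
      zero_mem' := ⟨R.zero_mem, fun u hu => V₁.zero_mem⟩
      smul_mem' := fun c x hx => ⟨R.smul_mem c hx.1, fun u hu => V₁.smul_mem c (hx.2 u hu)⟩ }
  have hquot : Module.finrank k (V ⧸ V₁) < Module.finrank k V₁ := by
    have := Submodule.finrank_quotient_add_finrank V₁
    omega
  have hleft : ∀ t : Finset V, ∀ v ∈ V₁, (∃ r ∈ Ls t, r v ≠ 0) → ∀ w ∈ V₁, ∃ r ∈ Ls t, r v = w := by
    rintro t v hv ⟨r, hr, hrv⟩ w hw
    have : (Ls t).map (LinearMap.applyₗ (R := k) v) = V₁ := by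
      apply hbig
      · rintro _ ⟨x, hx, rfl⟩
        exact hRst x hx.1 v hv
      · exact (Submodule.ne_bot_iff _).2 ⟨r v, ⟨r, hr, rfl⟩, hrv⟩
      · rintro s hs _ ⟨x, hx, rfl⟩
        exact ⟨s * x, ⟨R.mul_mem (hSR s hs) hx.1, fun u hu => hV₁s s hs _ (hx.2 u hu)⟩, rfl⟩
    rw [← this] at hw
    obtain ⟨x, hx, hxw⟩ := hw
    exact ⟨x, hx, hxw⟩
  have hex : ∀ t : Finset V, ∃ v ∈ V₁, ∃ r ∈ Ls t, r v ≠ 0 := by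
    intro t
    induction t using Finset.induction_on with
    | empty =>
      refine ⟨v₀, hv₀, ?_⟩
      by_contra hc
      push Not at hc
      have h1 := hS v₀ hv₀n
      have : Submodule.span k ((fun s : Module.End k V => s v₀) '' S) = ⊥ := by
        rw [Submodule.span_eq_bot]
        rintro _ ⟨s, hs, rfl⟩
        exact hc s ⟨hSR s hs, by simp⟩
      rw [this] at h1
      simp at h1
    | insert u t _ ih =>
      obtain ⟨v, hv, hr⟩ := ih
      refine ⟨v, hv, ?_⟩
      by_contra hc
      push Not at hc
      let a : Ls t →ₗ[k] V := (LinearMap.applyₗ (R := k) v) ∘ₗ (Ls t).subtype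
      let c : Ls t →ₗ[k] V ⧸ V₁ := V₁.mkQ ∘ₗ (LinearMap.applyₗ (R := k) u) ∘ₗ (Ls t).subtype
      have hker : LinearMap.ker c ≤ LinearMap.ker a := by
        rintro ⟨x, hx⟩ hxc
        have hxc' : x u ∈ V₁ := by
          simpa [c] using hxc
        apply hc x
        refine ⟨hx.1, fun u' hu' => ?_⟩
        rcases Finset.mem_insert.1 hu' with rfl | h
        · exact hxc'
        · exact hx.2 _ h
      have h1 : Module.finrank k V₁ ≤ Module.finrank k (LinearMap.range a) := by
        apply Submodule.finrank_mono
        intro w hw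
        obtain ⟨x, hx, hxw⟩ := hleft t v hv hr w hw
        exact ⟨⟨x, hx⟩, hxw⟩
      have h2 := LinearMap.finrank_range_add_finrank_ker a
      have h3 := LinearMap.finrank_range_add_finrank_ker c
      have h4 := Submodule.finrank_mono hker
      have h5 := Submodule.finrank_le (LinearMap.range c)
      omega
  have : Fintype V := Fintype.ofFinite V
  set J := Ls Finset.univ with hJ
  obtain ⟨v₁, hv₁, r₁, hr₁, hrv₁⟩ := hex Finset.univ
  suffices hfin : ∀ v ∈ V₁, v ≠ 0 → ∀ w ∈ V₁, ∃ x ∈ J, x v = w by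
    obtain ⟨x, hx, hxt⟩ := exists_trace_ne_zero_aux V₁ J
      (fun x hx y hy => ⟨R.mul_mem hx.1 hy.1, fun u hu => hx.2 _ (Finset.mem_univ _)⟩)
      (fun x hx v => hx.2 v (Finset.mem_univ _)) hV₁n hfin
    exact ⟨x, hx.1, hxt⟩
  · intro v hv hv0
    apply hleft Finset.univ v hv
    by_contra hc
    push Not at hc
    let W : Submodule k V :=
      { carrier := {w | w ∈ V₁ ∧ ∀ r ∈ J, r w = 0}
        add_mem' := fun {a b} ha hb => ⟨V₁.add_mem ha.1 hb.1, fun r hr => by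
          rw [map_add, ha.2 r hr, hb.2 r hr, add_zero]⟩
        zero_mem' := ⟨V₁.zero_mem, fun r _ => map_zero r⟩
        smul_mem' := fun c w hw => ⟨V₁.smul_mem c hw.1, fun r hr => by
          rw [map_smul, hw.2 r hr, smul_zero]⟩ }
    have hW : W = V₁ := by
      apply hbig
      · exact fun w hw => hw.1
      · exact (Submodule.ne_bot_iff _).2 ⟨v, ⟨hv, hc⟩, hv0⟩
      · intro s hs w hw
        refine ⟨hV₁s s hs w hw.1, fun r hr => ?_⟩
        exact hw.2 (r * s) ⟨R.mul_mem hr.1 (hSR s hs), fun u hu => hr.2 _ (Finset.mem_univ _)⟩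
    rw [← hW] at hv₁
    exact hrv₁ (hv₁.2 r₁ hr₁)



lemma exists_word_bound (k V : Type*) [Field k] [Finite k] [AddCommGroup V] [Module k V]
    [Module.Finite k V] [Nontrivial V] :
    ∃ B : ℕ, ∀ S : Set (Module.End k V), (∀ v : V, v ≠ 0 →
      Module.finrank k V <
        2 * Module.finrank k (Submodule.span k ((fun s : Module.End k V => s v) '' S))) →
    ∃ l : List (Module.End k V), l ≠ [] ∧ l.length ≤ B ∧ (∀ s ∈ l, s ∈ S) ∧
      LinearMap.trace k V l.prod ≠ 0 := by
  classical
  have : Finite V := Module.finite_of_finite k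
  have : Finite (Module.End k V) :=
    Finite.of_injective (fun f : Module.End k V => (f : V → V)) DFunLike.coe_injective
  have key : ∀ S : Set (Module.End k V), ∃ B : ℕ, (∀ v : V, v ≠ 0 →
      Module.finrank k V <
        2 * Module.finrank k (Submodule.span k ((fun s : Module.End k V => s v) '' S))) →
    ∃ l : List (Module.End k V), l ≠ [] ∧ l.length ≤ B ∧ (∀ s ∈ l, s ∈ S) ∧
      LinearMap.trace k V l.prod ≠ 0 := by
    intro S
    by_cases hS : ∀ v : V, v ≠ 0 → Module.finrank k V <
        2 * Module.finrank k (Submodule.span k ((fun s : Module.End k V => s v) '' S))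
    · obtain ⟨x, hx, hxt⟩ := exists_trace_ne_zero S hS
      have : ∃ l : List (Module.End k V), l ≠ [] ∧ (∀ s ∈ l, s ∈ S) ∧ l.prod = x := by
        clear hxt
        induction hx using Subsemigroup.closure_induction with
        | mem x hx => exact ⟨[x], by simp, by simpa using hx, by simp⟩
        | mul x y _ _ ihx ihy =>
          obtain ⟨l, h1, h2, h3⟩ := ihx
          obtain ⟨l', h1', h2', h3'⟩ := ihy
          refine ⟨l ++ l', by simp [h1], ?_, by simp [h3, h3']⟩
          intro s hs
          rcases List.mem_append.1 hs with h | h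
          · exact h2 s h
          · exact h2' s h
      obtain ⟨l, h1, h2, h3⟩ := this
      exact ⟨l.length, fun _ => ⟨l, h1, le_rfl, h2, by rwa [h3]⟩⟩
    · exact ⟨0, fun h => absurd h hS⟩
  choose B hB using key
  have : Fintype (Set (Module.End k V)) := Fintype.ofFinite _
  refine ⟨Finset.univ.sup B, fun S hS => ?_⟩
  obtain ⟨l, h1, h2, h3⟩ := hB S hS
  exact ⟨l, h1, h2.trans (Finset.le_sup (f := B) (Finset.mem_univ S)), h3⟩

/-- Monomials in a finite family. -/
def mon {A : Type*} [CommRing A] {n : ℕ} (x : Fin n → A) (α : Fin n → ℕ) : A := ∏ i, x i ^ α i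

lemma mon_add {A : Type*} [CommRing A] {n : ℕ} (x : Fin n → A) (α β : Fin n → ℕ) :
    mon x (α + β) = mon x α * mon x β := by
  simp [mon, pow_add, Finset.prod_mul_distrib]

lemma mon_mul {A : Type*} [CommRing A] {n : ℕ} (x : Fin n → A) (α : Fin n → ℕ) (q : ℕ) :
    mon x (fun i => q * α i) = mon x α ^ q := by
  simp only [mon, ← Finset.prod_pow]
  exact Finset.prod_congr rfl fun i _ => by rw [← pow_mul, mul_comm]

/-- The filtration by degree. -/
def Fil (k : Type*) {A : Type*} [Field k] [CommRing A] [Algebra k A] {n : ℕ} (x : Fin n → A)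
    (N : ℕ) : Submodule k A :=
  Submodule.span k (mon x '' {α | ∑ i, α i ≤ N})

section
variable {k A : Type*} [Field k] [CommRing A] [Algebra k A] {n : ℕ} (x : Fin n → A)

lemma mon_mem_Fil (α : Fin n → ℕ) (N : ℕ) (h : ∑ i, α i ≤ N) : mon x α ∈ Fil k x N :=
  Submodule.subset_span ⟨α, h, rfl⟩

lemma Fil_mono {M N : ℕ} (h : M ≤ N) : Fil k x M ≤ Fil k x N :=
  Submodule.span_mono (Set.image_mono fun _ hα => le_trans hα h)

lemma one_mem_Fil (N : ℕ) : (1 : A) ∈ Fil k x N := by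
  have := mon_mem_Fil (k := k) x (fun _ => 0) N (by simp)
  simpa [mon] using this

lemma x_mem_Fil (i : Fin n) : x i ∈ Fil k x 1 := by
  classical
  have := mon_mem_Fil (k := k) x (Pi.single i 1) 1 (by simp)
  have h2 : mon x (Pi.single i 1) = x i := by
    rw [mon, Finset.prod_eq_single i]
    · simp
    · intro j _ hj
      simp [Pi.single_eq_of_ne hj]
    · simp
  rwa [h2] at this

lemma mul_mem_Fil {M N : ℕ} {a b : A} (ha : a ∈ Fil k x M) (hb : b ∈ Fil k x N) :
    a * b ∈ Fil k x (M + N) := by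
  have h : Fil k x M * Fil k x N ≤ Fil k x (M + N) := by
    rw [Fil, Fil, Submodule.span_mul_span, Submodule.span_le]
    rintro _ ⟨_, ⟨α, hα, rfl⟩, _, ⟨β, hβ, rfl⟩, rfl⟩
    change mon x α * mon x β ∈ _
    rw [← mon_add]
    apply mon_mem_Fil
    simp only [Pi.add_apply, Finset.sum_add_distrib]
    exact add_le_add hα hβ
  exact h (Submodule.mul_mem_mul ha hb)

lemma pow_mem_Fil {M : ℕ} {a : A} (ha : a ∈ Fil k x M) (m : ℕ) : a ^ m ∈ Fil k x (m * M) := by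
  induction m with
  | zero => simpa using one_mem_Fil (k := k) x 0
  | succ m ih =>
    rw [pow_succ, Nat.succ_mul]
    exact mul_mem_Fil x ih ha

lemma prod_mem_Fil {ι : Type*} (s : Finset ι) (f : ι → A) (d : ι → ℕ)
    (h : ∀ i ∈ s, f i ∈ Fil k x (d i)) : ∏ i ∈ s, f i ∈ Fil k x (∑ i ∈ s, d i) := by
  classical
  induction s using Finset.induction_on with
  | empty => simpa using one_mem_Fil (k := k) x 0
  | insert i s hi ih =>
    rw [Finset.prod_insert hi, Finset.sum_insert hi]
    exact mul_mem_Fil x (h i (Finset.mem_insert_self _ _))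
      (ih fun j hj => h j (Finset.mem_insert_of_mem hj))

lemma finite_expo (N : ℕ) : {α : Fin n → ℕ | ∑ i, α i ≤ N}.Finite := by
  apply Set.Finite.subset (Set.finite_Iic (fun _ : Fin n => N))
  intro α hα i
  exact (Finset.single_le_sum (f := fun i => α i) (fun _ _ => Nat.zero_le _)
      (Finset.mem_univ i)).trans hα

instance finite_Fil (N : ℕ) : Module.Finite k (Fil k x N) :=
  Module.Finite.span_of_finite k ((finite_expo N).image _)

lemma finrank_Fil_le (N : ℕ) : Module.finrank k (Fil k x N) ≤ (N + 1) ^ n := by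
  classical
  have hsub : mon x '' {α | ∑ i, α i ≤ N} ⊆
      Set.range fun α : Fin n → Fin (N + 1) => mon x (fun i => (α i : ℕ)) := by
    rintro _ ⟨α, hα, rfl⟩
    refine ⟨fun i => ⟨α i, ?_⟩, rfl⟩
    exact Nat.lt_succ_of_le ((Finset.single_le_sum (f := fun i => α i) (fun _ _ => Nat.zero_le _)
      (Finset.mem_univ i)).trans hα)
  have h1 : Fil k x N ≤ Submodule.span k
      (Set.range fun α : Fin n → Fin (N + 1) => mon x (fun i => (α i : ℕ))) :=
    Submodule.span_mono hsub
  have : Module.Finite k (Submodule.span k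
      (Set.range fun α : Fin n → Fin (N + 1) => mon x (fun i => (α i : ℕ)))) :=
    Module.Finite.span_of_finite k (Set.finite_range _)
  refine (Submodule.finrank_mono h1).trans ?_
  refine (finrank_range_le_card _).trans ?_
  simp

lemma exists_mem_Fil (hx : Algebra.adjoin k (Set.range x) = ⊤) (a : A) : ∃ N, a ∈ Fil k x N := by
  have ha : a ∈ Algebra.adjoin k (Set.range x) := hx ▸ Algebra.mem_top
  induction ha using Algebra.adjoin_induction with
  | mem y hy =>
    obtain ⟨i, rfl⟩ := hy
    exact ⟨1, x_mem_Fil x i⟩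
  | algebraMap r =>
    refine ⟨0, ?_⟩
    rw [Algebra.algebraMap_eq_smul_one]
    exact Submodule.smul_mem _ _ (one_mem_Fil x 0)
  | add a b _ _ iha ihb =>
    obtain ⟨M, hM⟩ := iha
    obtain ⟨N, hN⟩ := ihb
    exact ⟨max M N, Submodule.add_mem _ (Fil_mono x (le_max_left _ _) hM)
      (Fil_mono x (le_max_right _ _) hN)⟩
  | mul a b _ _ iha ihb =>
    obtain ⟨M, hM⟩ := iha
    obtain ⟨N, hN⟩ := ihb
    exact ⟨M + N, mul_mem_Fil x hM hN⟩

lemma exists_mem_Fil_all (hx : Algebra.adjoin k (Set.range x) = ⊤) {ι : Type*} [Finite ι]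
    (a : ι → A) : ∃ N, ∀ i, a i ∈ Fil k x N := by
  choose N hN using fun i => exists_mem_Fil x hx (a i)
  cases nonempty_fintype ι
  exact ⟨Finset.univ.sup N, fun i => Fil_mono x (Finset.le_sup (Finset.mem_univ i)) (hN i)⟩

lemma exists_stretch (hx : Algebra.adjoin k (Set.range x) = ⊤) (φ : A →ₐ[k] A) :
    ∃ δ, ∀ N, ∀ a ∈ Fil k x N, φ a ∈ Fil k x (δ * N) := by
  obtain ⟨δ, hδ⟩ := exists_mem_Fil_all x hx (fun i => φ (x i))
  refine ⟨δ, fun N => ?_⟩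
  suffices Fil k x N ≤ (Fil k x (δ * N)).comap φ.toLinearMap from this
  rw [Fil, Submodule.span_le]
  rintro _ ⟨α, hα, rfl⟩
  change φ (mon x α) ∈ Fil k x (δ * N)
  rw [mon, map_prod]
  have h := prod_mem_Fil (k := k) x Finset.univ (fun i => φ (x i ^ α i)) (fun i => α i * δ)
    (fun i _ => by rw [map_pow]; exact pow_mem_Fil x (hδ i) _)
  refine Fil_mono x ?_ h
  rw [← Finset.sum_mul, mul_comm]
  exact Nat.mul_le_mul_left _ hα

lemma exists_growth [Nontrivial A] (c : ℕ) : ∃ L, n ≤ L ∧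
    Module.finrank k (Fil k x (L + c + 1)) < 2 * Module.finrank k (Fil k x (L - n)) := by
  by_contra hc
  push Not at hc
  set h := n + c + 1
  have h1 : ∀ m, 2 ^ m ≤ Module.finrank k (Fil k x (m * h)) := by
    intro m
    induction m with
    | zero =>
      rw [pow_zero, Nat.one_le_iff_ne_zero, ← Nat.pos_iff_ne_zero, Module.finrank_pos_iff]
      exact ⟨⟨1, one_mem_Fil x _⟩, 0, fun h => one_ne_zero (congrArg Subtype.val h)⟩
    | succ m ih =>
      have := hc (m * h + n) (by omega)
      rw [show m * h + n - n = m * h by omega, show m * h + n + c + 1 = (m + 1) * h by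
        rw [Nat.succ_mul]; omega] at this
      rw [pow_succ]
      omega
  have h2 : ∀ m, 1 ≤ m → 2 ^ m ≤ (h + 1) ^ n * m ^ n := by
    intro m hm
    refine (h1 m).trans ((finrank_Fil_le x _).trans ?_)
    rw [← mul_pow]
    apply Nat.pow_le_pow_left
    nlinarith
  have h3 := tendsto_pow_const_div_const_pow_of_one_lt n (r := 2) (by norm_num)
  have h4 : (0 : ℝ) < 1 / ((h + 1) ^ n : ℝ) := by positivity
  obtain ⟨m, hm1, hm⟩ := ((h3.eventually (gt_mem_nhds h4)).and
    (Filter.eventually_ge_atTop 1)).exists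
  have h5 : ((2 : ℝ) ^ m) ≤ (h + 1) ^ n * m ^ n := by exact_mod_cast h2 m hm
  rw [div_lt_div_iff₀ (by positivity) (by positivity)] at hm1
  nlinarith
end

lemma exists_frob_functional (p : ℕ) [Fact p.Prime] (F : Type*) [Field F] [Algebra (ZMod p) F] :
    ∃ C : F →ₗ[ZMod p] F, C 1 = 1 ∧ ∀ a m, C (a ^ p * m) = a * C m := by
  have : CharP F p := charP_of_injective_algebraMap (algebraMap (ZMod p) F).injective p
  let S : Subfield F := (frobenius F p).fieldRange
  let e : F ≃+* S := (frobenius F p).rangeRestrictFieldEquiv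
  have he : ∀ a, (e a : F) = a ^ p := fun a => rfl
  let i : S →ₗ[S] F := LinearMap.toSpanSingleton S F 1
  obtain ⟨l, hl⟩ := LinearMap.exists_leftInverse_of_injective i (by
    rw [LinearMap.ker_eq_bot]
    intro a b h
    simpa [i, Subfield.smul_def] using h)
  have hl1 : l 1 = 1 := by
    have := LinearMap.congr_fun hl 1
    simpa [i] using this
  have hadd : ∀ a b, e.symm (l (a + b)) = e.symm (l a) + e.symm (l b) := by
    intro a b; rw [map_add, map_add]
  let C0 : F →+ F := AddMonoidHom.mk' (fun y => e.symm (l y)) hadd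
  refine ⟨AddMonoidHom.toZModLinearMap p C0, ?_, ?_⟩
  · change e.symm (l 1) = 1
    rw [hl1, map_one]
  · intro a m
    change e.symm (l (a ^ p * m)) = a * e.symm (l m)
    have : a ^ p * m = (e a) • m := by rw [Subfield.smul_def, he, smul_eq_mul]
    rw [this, map_smul, smul_eq_mul, map_mul, RingEquiv.symm_apply_apply]

section
variable {p : ℕ} [Fact p.Prime] {A : Type*} [CommRing A] [IsDomain A] [Algebra (ZMod p) A]
  {n : ℕ} (x : Fin n → A)

lemma span_induct (hx : Algebra.adjoin (ZMod p) (Set.range x) = ⊤) (W : Submodule (ZMod p) A)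
    (h : ∀ α, mon x α ∈ W) (a : A) : a ∈ W := by
  obtain ⟨N, hN⟩ := exists_mem_Fil x hx a
  have : Fil (ZMod p) x N ≤ W := by
    rw [Fil, Submodule.span_le]
    rintro _ ⟨α, -, rfl⟩
    exact h α
  exact this hN

lemma mon_split (q : ℕ) (α : Fin n → ℕ) :
    mon x α = mon x (fun i => α i / q) ^ q * mon x (fun i => α i % q) := by
  rw [← mon_mul, ← mon_add]
  congr 1
  funext i
  exact (Nat.div_add_mod _ _).symm

lemma finite_residues (q : ℕ) (hq : 0 < q) : {α : Fin n → ℕ | ∀ i, α i < q}.Finite := by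
  apply Set.Finite.subset (Set.finite_Iic (fun _ : Fin n => q))
  intro α hα i
  exact (hα i).le

lemma exists_cartier (hx : Algebra.adjoin (ZMod p) (Set.range x) = ⊤) :
    ∃ C : A →ₗ[ZMod p] A, C 1 ≠ 0 ∧ ∀ a m, C (a ^ p * m) = a * C m := by
  classical
  have hp : p.Prime := Fact.out
  let F := FractionRing A
  obtain ⟨C0, hC1, hC⟩ := exists_frob_functional p F
  let s : Finset F := ((finite_residues (n := n) p hp.pos).toFinset).image
    (fun α => C0 (algebraMap A F (mon x α)))
  obtain ⟨⟨d, hd⟩, hds⟩ := IsLocalization.exist_integer_multiples_of_finset (nonZeroDivisors A) s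
  have hinteg : ∀ a : A, ∃ u : A, algebraMap A F u = algebraMap A F d * C0 (algebraMap A F a) := by
    let W : Submodule (ZMod p) A :=
      { carrier := {a | ∃ u : A, algebraMap A F u = algebraMap A F d * C0 (algebraMap A F a)}
        add_mem' := by
          rintro a b ⟨u, hu⟩ ⟨v, hv⟩
          exact ⟨u + v, by rw [map_add, map_add, map_add, mul_add, hu, hv]⟩
        zero_mem' := ⟨0, by simp⟩
        smul_mem' := by
          rintro c a ⟨u, hu⟩
          refine ⟨c • u, ?_⟩
          have h1 : ∀ y : A, algebraMap A F (c • y) = c • algebraMap A F y := fun y =>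
            ((IsScalarTower.toAlgHom (ZMod p) A F).toLinearMap).map_smul c y
          rw [h1, h1, map_smul, hu, mul_smul_comm] }
    refine span_induct x hx W fun α => ?_
    have hm : C0 (algebraMap A F (mon x (fun i => α i % p))) ∈ s :=
      Finset.mem_image_of_mem _ ((Set.Finite.mem_toFinset _).2 fun i => Nat.mod_lt _ hp.pos)
    obtain ⟨u, hu⟩ := hds _ hm
    refine ⟨mon x (fun i => α i / p) * u, ?_⟩
    rw [mon_split x p α, map_mul, map_mul, map_pow, hC, hu, Algebra.smul_def]
    ring
  choose C hCu using hinteg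
  have hinj : Function.Injective (algebraMap A F) := IsFractionRing.injective A F
  have hadd : ∀ a b, C (a + b) = C a + C b := by
    intro a b
    apply hinj
    rw [map_add, hCu, hCu, hCu, map_add, map_add, mul_add]
  refine ⟨AddMonoidHom.toZModLinearMap p (AddMonoidHom.mk' C hadd), ?_, ?_⟩
  · change C 1 ≠ 0
    intro h
    have := hCu 1
    rw [h, map_zero, map_one, hC1, mul_one] at this
    exact nonZeroDivisors.ne_zero hd (hinj (by rw [← this, map_zero]))
  · intro a m
    change C (a ^ p * m) = a * C m
    apply hinj
    rw [hCu, map_mul (algebraMap A F) (a ^ p), map_mul (algebraMap A F) a, map_pow, hC, hCu]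
    ring

lemma cartier_iter (C : Module.End (ZMod p) A) (hC : ∀ a m, C (a ^ p * m) = a * C m) (j : ℕ)
    (a m : A) : (C ^ j) (a ^ p ^ j * m) = a * (C ^ j) m := by
  induction j generalizing m with
  | zero => simp
  | succ j ih =>
    rw [pow_succ C, Module.End.mul_apply, Module.End.mul_apply, pow_succ p, pow_mul, hC, ih]

lemma cartier_nonzero (C : Module.End (ZMod p) A) (hC1 : C 1 ≠ 0)
    (hC : ∀ a m, C (a ^ p * m) = a * C m) (j : ℕ)
    (v : A) (hv : v ≠ 0) : ∃ g, (C ^ j) (g * v) ≠ 0 := by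
  have hp : p.Prime := Fact.out
  induction j generalizing v with
  | zero => exact ⟨1, by simpa using hv⟩
  | succ j ih =>
    have h1 : C (v ^ (p - 1) * v) ≠ 0 := by
      rw [← pow_succ, Nat.sub_add_cancel hp.one_le, ← mul_one (v ^ p), hC]
      exact mul_ne_zero hv hC1
    obtain ⟨g, hg⟩ := ih _ h1
    refine ⟨g ^ p * v ^ (p - 1), ?_⟩
    rwa [pow_succ C, Module.End.mul_apply, mul_assoc, hC]

lemma cartier_nonzero_mon (hx : Algebra.adjoin (ZMod p) (Set.range x) = ⊤)
    (C : Module.End (ZMod p) A) (hC1 : C 1 ≠ 0)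
    (hC : ∀ a m, C (a ^ p * m) = a * C m) (j : ℕ)
    (v : A) (hv : v ≠ 0) : ∃ g ∈ Fil (ZMod p) x (n * p ^ j), (C ^ j) (g * v) ≠ 0 := by
  have hp : p.Prime := Fact.out
  by_contra hc
  push Not at hc
  obtain ⟨g, hg⟩ := cartier_nonzero C hC1 hC j v hv
  apply hg
  let W : Submodule (ZMod p) A := LinearMap.ker ((C ^ j) ∘ₗ LinearMap.mulRight (ZMod p) v)
  refine span_induct x hx W (fun α => ?_) g
  change (C ^ j) (mon x α * v) = 0
  rw [mon_split x (p ^ j) α, mul_assoc, cartier_iter C hC, hc, mul_zero]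
  apply mon_mem_Fil
  calc ∑ i, α i % p ^ j ≤ ∑ i : Fin n, p ^ j :=
        Finset.sum_le_sum fun i _ => (Nat.mod_lt _ (pow_pos hp.pos _)).le
    _ = _ := by simp

lemma cartier_degree (hx : Algebra.adjoin (ZMod p) (Set.range x) = ⊤)
    (C : Module.End (ZMod p) A) (hC : ∀ a m, C (a ^ p * m) = a * C m) :
    ∃ c : ℕ, ∀ j M a, a ∈ Fil (ZMod p) x (p ^ j * M + c) → (C ^ j) a ∈ Fil (ZMod p) x (M + c) := by
  have hp : p.Prime := Fact.out
  have := (finite_residues (n := n) p hp.pos).to_subtype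
  obtain ⟨c, hc⟩ := exists_mem_Fil_all (k := ZMod p) x hx
    (fun α : {α : Fin n → ℕ | ∀ i, α i < p} => C (mon x α.1))
  have h1 : ∀ m a, a ∈ Fil (ZMod p) x m → C a ∈ Fil (ZMod p) x (m / p + c) := by
    intro m
    suffices Fil (ZMod p) x m ≤ (Fil (ZMod p) x (m / p + c)).comap C from this
    rw [Fil, Submodule.span_le]
    rintro _ ⟨α, hα, rfl⟩
    change C (mon x α) ∈ Fil (ZMod p) x (m / p + c)
    rw [mon_split x p α, hC]
    refine mul_mem_Fil x (mon_mem_Fil x _ _ ?_) (hc ⟨_, fun i => Nat.mod_lt _ hp.pos⟩)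
    rw [Nat.le_div_iff_mul_le hp.pos, Finset.sum_mul]
    exact (Finset.sum_le_sum fun i _ => Nat.div_mul_le_self _ _).trans hα
  refine ⟨2 * c, fun j => ?_⟩
  induction j with
  | zero => intro M a ha; simpa using ha
  | succ j ih =>
    intro M a ha
    rw [pow_succ C, Module.End.mul_apply]
    refine ih M _ (Fil_mono x ?_ (h1 _ _ ha))
    have h2 : (p ^ (j + 1) * M + 2 * c) / p = p ^ j * M + 2 * c / p := by
      rw [pow_succ, mul_comm (p ^ j) p, mul_assoc, Nat.mul_add_div hp.pos]
    have h3 : 2 * c / p ≤ c := by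
      calc 2 * c / p ≤ 2 * c / 2 := Nat.div_le_div_left hp.two_le (by norm_num)
        _ = c := by omega
    omega
end

lemma iter_pow_mod {A : Type*} [CommRing A] (ψ : A →+* A) (q : ℕ) (a : A) (i : ℕ) :
    ψ^[i] a - a ^ (q ^ i) ∈ Ideal.span (Set.range fun a : A => ψ a - a ^ q) := by
  set I := Ideal.span (Set.range fun a : A => ψ a - a ^ q)
  have h1 : ∀ a, Ideal.Quotient.mk I (ψ a) = Ideal.Quotient.mk I a ^ q := by
    intro a
    rw [← map_pow, Ideal.Quotient.eq]
    exact Ideal.subset_span ⟨a, rfl⟩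
  have h2 : ∀ i, Ideal.Quotient.mk I (ψ^[i] a) = Ideal.Quotient.mk I a ^ (q ^ i) := by
    intro i
    induction i with
    | zero => simp
    | succ i ih => rw [Function.iterate_succ_apply', h1, ih, ← pow_mul, pow_succ]
  rw [← Ideal.Quotient.eq, h2, map_pow]

lemma digits_inj (q d : ℕ) (hq : 1 < q) (α β : Fin d → ℕ) (hα : ∀ i, α i < q)
    (hβ : ∀ i, β i < q) (h : ∑ i, α i * q ^ (i : ℕ) = ∑ i, β i * q ^ (i : ℕ)) : α = β := by
  induction d with
  | zero => exact Subsingleton.elim _ _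
  | succ d ih =>
    rw [Fin.sum_univ_succ, Fin.sum_univ_succ] at h
    have e : ∀ γ : Fin (d + 1) → ℕ, ∑ i : Fin d, γ i.succ * q ^ ((i.succ : Fin (d + 1)) : ℕ) =
        q * ∑ i : Fin d, γ i.succ * q ^ (i : ℕ) := by
      intro γ
      rw [Finset.mul_sum]
      refine Finset.sum_congr rfl fun i _ => ?_
      rw [Fin.val_succ, pow_succ]; ring
    rw [e, e] at h
    simp only [Fin.val_zero, pow_zero, mul_one] at h
    have h0 : α 0 = β 0 := by
      have := congrArg (· % q) h
      simpa [Nat.add_mul_mod_self_left, Nat.mod_eq_of_lt (hα 0), Nat.mod_eq_of_lt (hβ 0)] using this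
    have h1 : ∑ i : Fin d, α i.succ * q ^ (i : ℕ) = ∑ i : Fin d, β i.succ * q ^ (i : ℕ) := by
      rw [h0] at h
      have := Nat.add_left_cancel h
      exact Nat.eq_of_mul_eq_mul_left (by omega) this
    have h2 := ih (fun i => α i.succ) (fun i => β i.succ) (fun i => hα _) (fun i => hβ _) h1
    funext i
    refine Fin.cases h0 (fun j => congrFun h2 j) i

open MvPolynomial in
lemma kronecker {k : Type*} [Field k] {d : ℕ} (P : MvPolynomial (Fin (d + 1)) k) (hP : P ≠ 0)
    (q : ℕ) (hq : 1 < q) (hdeg : P.totalDegree < q) :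
    (aeval (fun i : Fin (d + 1) => (Polynomial.X : Polynomial k) ^ (q ^ (i : ℕ))) P) ≠ 0 ∧
    (aeval (fun i : Fin (d + 1) => (Polynomial.X : Polynomial k) ^ (q ^ (i : ℕ))) P).natDegree
      ≤ P.totalDegree * q ^ d := by
  have hval : aeval (fun i : Fin (d + 1) => (Polynomial.X : Polynomial k) ^ (q ^ (i : ℕ))) P =
      ∑ α ∈ P.support, Polynomial.C (P.coeff α) *
        Polynomial.X ^ (∑ i, α i * q ^ (i : ℕ)) := by
    rw [aeval_def, eval₂_eq']
    refine Finset.sum_congr rfl fun α _ => ?_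
    rw [← Finset.prod_pow_eq_pow_sum]
    congr 1
    refine Finset.prod_congr rfl fun i _ => ?_
    rw [← pow_mul, mul_comm]
  have hle : ∀ α ∈ P.support, ∑ i, α i ≤ P.totalDegree := by
    intro α hα
    have := le_totalDegree hα
    rwa [Finsupp.sum_fintype _ _ (by simp)] at this
  have hlt : ∀ α ∈ P.support, ∀ i, α i < q := fun α hα i =>
    lt_of_le_of_lt ((Finset.single_le_sum (f := fun i => α i) (fun _ _ => Nat.zero_le _)
      (Finset.mem_univ i)).trans (hle α hα)) hdeg
  constructor
  · obtain ⟨α, hα⟩ := (support_nonempty (p := P)).2 hP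
    intro h0
    have h1 := congrArg (fun f => Polynomial.coeff f (∑ i, α i * q ^ (i : ℕ))) (hval.symm.trans h0)
    simp only [Polynomial.finsetSum_coeff, Polynomial.coeff_C_mul, Polynomial.coeff_X_pow,
      Polynomial.coeff_zero] at h1
    rw [Finset.sum_eq_single α] at h1
    · rw [if_pos rfl, mul_one] at h1
      exact (mem_support_iff.1 hα) h1
    · intro β hβ hne
      rw [if_neg, mul_zero]
      intro h
      apply hne
      apply DFunLike.coe_injective
      exact (digits_inj q _ hq _ _ (hlt α hα) (hlt β hβ) h).symm
    · exact fun h => absurd hα h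
  · rw [hval]
    apply Polynomial.natDegree_sum_le_of_forall_le
    intro α hα
    refine (Polynomial.natDegree_C_mul_X_pow_le _ _).trans ?_
    calc ∑ i, α i * q ^ (i : ℕ) ≤ ∑ i, α i * q ^ d := by
          refine Finset.sum_le_sum fun i _ => Nat.mul_le_mul_left _ ?_
          exact Nat.pow_le_pow_right (by omega) (by omega)
      _ = (∑ i, α i) * q ^ d := by rw [Finset.sum_mul]
      _ ≤ _ := Nat.mul_le_mul_right _ (hle α hα)

lemma exists_dependence {k A : Type*} [Field k] [CommRing A] [IsDomain A] [Algebra k A]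
    [Algebra.FiniteType k A] : ∃ d : ℕ, ∀ x : Fin (d + 1) → A, 
      ∃ P : MvPolynomial (Fin (d + 1)) k, P ≠ 0 ∧ MvPolynomial.aeval x P = 0 := by
  have h : Algebra.trdeg k A < Cardinal.aleph0 := trdeg_lt_aleph0_of_finiteType
  obtain ⟨d, hd⟩ := Cardinal.lt_aleph0.1 h
  refine ⟨d, fun x => ?_⟩
  by_contra hc
  push Not at hc
  have : AlgebraicIndependent k x := algebraicIndependent_iff.2 fun P hP => by
    by_contra hne
    exact hc P hne hP
  have h2 := this.lift_cardinalMk_le_trdeg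
  rw [hd] at h2
  simp at h2

lemma unif_nilp (p : ℕ) [Fact p.Prime] (K : Type*) [Field K] [Algebra (ZMod p) K]
    [IsAlgClosure (ZMod p) K] {A : Type*} [CommRing A] [IsDomain A] [Algebra (ZMod p) A]
    [Algebra.FiniteType (ZMod p) A] (φ : A →+* A) (hφ : Function.Injective φ) (D : A) (hD : D ≠ 0)
    (hno : ∀ (β : A →+* K) (b : ℕ), 1 ≤ b → (∀ a, β (φ^[b] a) = β a) → ∃ n, β (φ^[n] D) = 0)
    (b : ℕ) (hb : 1 ≤ b) :
    ∃ E : A, E ≠ 0 ∧ ∃ j₀, ∀ j, j₀ ≤ j →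
      E ∈ Ideal.span (Set.range fun a : A => φ^[b] a - a ^ (p ^ j) ^ b) := by
  classical
  have hp : p.Prime := Fact.out
  let ψ : A →+* A := φ ^ b
  have hψ : ∀ a, ψ a = φ^[b] a := fun a => by simp [ψ, RingHom.coe_pow]
  have hφi : ∀ n, Function.Injective (φ^[n]) := fun n => hφ.iterate n
  let Δ : A := ∏ i ∈ Finset.range b, φ^[i] D
  have hΔ : Δ ≠ 0 := by
    refine Finset.prod_ne_zero_iff.2 fun i _ h => hD (hφi i ?_)
    rw [h, iterate_map_zero]
  obtain ⟨d, hd⟩ := exists_dependence (k := ZMod p) (A := A)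
  obtain ⟨P, hP0, hP⟩ := hd (fun i => ψ^[(i : ℕ)] Δ)
  have hψi : Function.Injective ψ := fun x y h => hφi b (by rwa [hψ, hψ] at h)
  refine ⟨(ψ^[d] Δ) ^ P.totalDegree, pow_ne_zero _ fun h => hΔ (hψi.iterate d ?_),
    P.totalDegree + 1, ?_⟩
  · rw [h, iterate_map_zero]
  intro j hj
  set q := (p ^ j) ^ b with hq
  have hqj : j < q := by
    calc j < p ^ j := Nat.lt_pow_self hp.one_lt
      _ ≤ q := Nat.le_self_pow (by omega) _
  obtain ⟨hk0, hkd⟩ := kronecker P hP0 q (by omega) (by omega)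
  set I := Ideal.span (Set.range fun a : A => φ^[b] a - a ^ q) with hI
  have hI' : I = Ideal.span (Set.range fun a : A => ψ a - a ^ q) := by simp only [hI, hψ]
  have hmod : ∀ i a, Ideal.Quotient.mk I (ψ^[i] a) = Ideal.Quotient.mk I a ^ (q ^ i) := by
    intro i a
    rw [← map_pow, Ideal.Quotient.eq, hI']
    exact iter_pow_mod ψ q a i
  have hrad : ∀ m : Ideal A, m.IsMaximal → I ≤ m → Δ ∈ m := by
    intro m hm hIm
    let _ : Field (A ⧸ m) := Ideal.Quotient.field m
    have : Module.Finite (ZMod p) (A ⧸ m) := finite_of_finite_type_of_isJacobsonRing _ _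
    have : Finite (A ⧸ m) := Module.finite_of_finite (ZMod p)
    have : Fintype (A ⧸ m) := Fintype.ofFinite _
    have : IsAlgClosed K := IsAlgClosure.isAlgClosed (ZMod p)
    let e : (A ⧸ m) →ₐ[ZMod p] K := IsAlgClosed.lift
    let β : A →+* K := (e : (A ⧸ m) →+* K).comp (Ideal.Quotient.mk m)
    have hβ : ∀ i a, β (ψ^[i] a) = β a ^ (q ^ i) := by
      intro i a
      rw [← map_pow]
      apply congrArg e
      rw [Ideal.Quotient.eq]
      apply hIm
      rw [hI']
      exact iter_pow_mod ψ q a i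
    have hψit : ∀ i a, ψ^[i] a = φ^[b * i] a := by
      intro i a
      have : (ψ : A → A) = φ^[b] := funext hψ
      rw [this, ← Function.iterate_mul]
    have : CharP (A ⧸ m) p := charP_of_injective_algebraMap (algebraMap (ZMod p) (A ⧸ m)).injective p
    obtain ⟨r, hp', hr⟩ := FiniteField.card (A ⧸ m) p
    have hper : ∀ a, β (φ^[b * r] a) = β a := by
      intro a
      rw [← hψit, hβ, ← map_pow]
      apply congrArg e
      rw [map_pow, hq]
      have : ((p ^ j) ^ b) ^ (r : ℕ) = (Fintype.card (A ⧸ m)) ^ (j * b) := by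
        rw [hr]; ring
      rw [this, FiniteField.pow_card_pow]
    obtain ⟨n, hn⟩ := hno β (b * r) (Nat.mul_pos hb r.pos) hper
    have hn2 : φ^[n] D = ψ^[n / b] (φ^[n % b] D) := by
      rw [hψit, ← Function.iterate_add_apply, Nat.div_add_mod]
    rw [hn2, hβ] at hn
    have hn3 : β (φ^[n % b] D) = 0 := eq_zero_of_pow_eq_zero hn
    have hn4 : φ^[n % b] D ∈ m := by
      have : e (Ideal.Quotient.mk m (φ^[n % b] D)) = e 0 := by rw [map_zero]; exact hn3
      exact Ideal.Quotient.eq_zero_iff_mem.1 (e.injective this)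
    exact Ideal.mem_of_dvd m (Finset.dvd_prod_of_mem _ (Finset.mem_range.2 (Nat.mod_lt _ hb))) hn4
  set f := MvPolynomial.aeval (fun i : Fin (d + 1) => (Polynomial.X : Polynomial (ZMod p)) ^ (q ^ (i : ℕ))) P with hf
  have hfΔ : Polynomial.aeval Δ f ∈ I := by
    rw [← Ideal.Quotient.eq_zero_iff_mem]
    have h1 : Ideal.Quotient.mk I (Polynomial.aeval Δ f) =
        Ideal.Quotient.mk I (MvPolynomial.aeval (fun i : Fin (d + 1) => ψ^[(i : ℕ)] Δ) P) := by
      change (((Ideal.Quotient.mkₐ (ZMod p) I).comp (Polynomial.aeval Δ)).comp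
        (MvPolynomial.aeval (fun i : Fin (d + 1) => (Polynomial.X : Polynomial (ZMod p)) ^ (q ^ (i : ℕ))))) P
        = ((Ideal.Quotient.mkₐ (ZMod p) I).comp (MvPolynomial.aeval (fun i : Fin (d + 1) => ψ^[(i : ℕ)] Δ))) P
      congr 1
      apply MvPolynomial.algHom_ext
      intro i
      simp [hmod]
    rw [h1, hP, map_zero]
  obtain ⟨u, hu, hnd⟩ := Polynomial.exists_eq_pow_rootMultiplicity_mul_and_not_dvd f hk0 0
  set e := Polynomial.rootMultiplicity 0 f with he
  rw [map_zero, sub_zero] at hu hnd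
  have hu0 : u ≠ 0 := fun h => hnd (h ▸ dvd_zero _)
  have hele : e ≤ P.totalDegree * q ^ d := by
    refine le_trans ?_ hkd
    rw [hu, Polynomial.natDegree_mul (pow_ne_zero _ Polynomial.X_ne_zero) hu0,
      Polynomial.natDegree_X_pow]
    exact Nat.le_add_right _ _
  have hΔe : Δ ^ e ∈ I := by
    have htop : Ideal.span {Polynomial.aeval Δ u} ⊔ I = ⊤ := by
      by_contra hne
      obtain ⟨m, hm, hle⟩ := Ideal.exists_le_maximal _ hne
      have h1 : Polynomial.aeval Δ u ∈ m :=
        hle (Ideal.mem_sup_left (Ideal.mem_span_singleton_self _))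
      have h2 : Δ ∈ m := hrad m hm (le_sup_right.trans hle)
      rw [← Polynomial.divX_mul_X_add u, map_add, map_mul, Polynomial.aeval_X,
        Polynomial.aeval_C] at h1
      have h3 := (Ideal.add_mem_iff_right m (m.mul_mem_left _ h2)).1 h1
      have h4 : u.coeff 0 ≠ 0 := fun h => hnd (Polynomial.X_dvd_iff.2 h)
      exact hm.ne_top (Ideal.eq_top_of_isUnit_mem m h3 ((isUnit_iff_ne_zero.2 h4).map _))
    obtain ⟨y, hy, z, hz, hyz⟩ := Submodule.mem_sup.1 ((Ideal.eq_top_iff_one _).1 htop)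
    obtain ⟨c, rfl⟩ := Ideal.mem_span_singleton.1 hy
    have h5 : Polynomial.aeval Δ f = Δ ^ e * Polynomial.aeval Δ u := by
      conv_lhs => rw [hu]
      simp
    rw [h5] at hfΔ
    have h6 : Δ ^ e = (Δ ^ e * Polynomial.aeval Δ u) * c + Δ ^ e * z := by
      rw [mul_assoc, ← mul_add, hyz, mul_one]
    rw [h6]
    exact I.add_mem (I.mul_mem_right _ hfΔ) (I.mul_mem_left _ hz)
  rw [← Ideal.Quotient.eq_zero_iff_mem, map_pow, hmod, ← pow_mul, ← map_pow,
    Ideal.Quotient.eq_zero_iff_mem, mul_comm]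
  exact Ideal.pow_mem_of_pow_mem _ hΔe hele

section
variable {k A : Type*} [Field k] [AddCommGroup A] [Module k A]

/-- A chosen linear projection onto a subspace. -/
noncomputable def projW (W : Submodule k A) : A →ₗ[k] W :=
  (LinearMap.exists_leftInverse_of_injective W.subtype (Submodule.ker_subtype W)).choose

lemma projW_apply (W : Submodule k A) (w : A) (hw : w ∈ W) : projW W w = ⟨w, hw⟩ :=
  LinearMap.congr_fun
    (LinearMap.exists_leftInverse_of_injective W.subtype (Submodule.ker_subtype W)).choose_spec
    ⟨w, hw⟩

/-- Compression of an operator to a subspace. -/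
noncomputable def compW (W : Submodule k A) (T : Module.End k A) : Module.End k W :=
  projW W ∘ₗ T ∘ₗ W.subtype

lemma compW_apply (W : Submodule k A) (T : Module.End k A) (v : W) (h : T v ∈ W) :
    (compW W T v : A) = T v := by
  change ((projW W (T v) : W) : A) = T v
  rw [projW_apply W _ h]

lemma trW_mono (W W2 : Submodule k A) [Module.Finite k W] [Module.Finite k W2] (h : W ≤ W2)
    (T : Module.End k A) (hT : ∀ v ∈ W2, T v ∈ W) :
    LinearMap.trace k W (compW W T) = LinearMap.trace k W2 (compW W2 T) := by
  let T' : W2 →ₗ[k] W := LinearMap.codRestrict W (T ∘ₗ W2.subtype) (fun v => hT v v.2)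
  let i : W →ₗ[k] W2 := Submodule.inclusion h
  have h1 : compW W T = T' ∘ₗ i := by
    ext v
    rw [compW_apply W T v (hT v (h v.2))]
    rfl
  have h2 : compW W2 T = i ∘ₗ T' := by
    ext v
    rw [compW_apply W2 T v (h (hT v v.2))]
    rfl
  rw [h1, h2, LinearMap.trace_comp_comm']

lemma trW_comm (W W2 : Submodule k A) [Module.Finite k W] [Module.Finite k W2] (h : W ≤ W2)
    (T a : Module.End k A) (ha : ∀ v ∈ W, a v ∈ W2) (hT : ∀ v ∈ W2, T v ∈ W)
    (haT : ∀ v ∈ W2, a (T v) ∈ W) :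
    LinearMap.trace k W (compW W (T * a)) = LinearMap.trace k W (compW W (a * T)) := by
  rw [trW_mono W W2 h (a * T) haT]
  let T' : W2 →ₗ[k] W := LinearMap.codRestrict W (T ∘ₗ W2.subtype) (fun v => hT v v.2)
  let a' : W →ₗ[k] W2 := LinearMap.codRestrict W2 (a ∘ₗ W.subtype) (fun v => ha v v.2)
  have h1 : compW W (T * a) = T' ∘ₗ a' := by
    ext v
    rw [compW_apply W (T * a) v (hT _ (ha _ v.2))]
    rfl
  have h2 : compW W2 (a * T) = a' ∘ₗ T' := by
    ext v
    rw [compW_apply W2 (a * T) v (h (haT v v.2))]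
    rfl
  rw [h1, h2, LinearMap.trace_comp_comm']

end

section
variable {p : ℕ} [Fact p.Prime] {A : Type*} [CommRing A] [IsDomain A] [Algebra (ZMod p) A]
  {n : ℕ} (x : Fin n → A)

/-- The twisted operator `v ↦ C^j (h φ(v))`. -/
noncomputable def opS (φ : A →ₐ[ZMod p] A) (C : Module.End (ZMod p) A) (j : ℕ) (h : A) :
    Module.End (ZMod p) A :=
  (C ^ j) ∘ₗ LinearMap.mulLeft (ZMod p) h ∘ₗ φ.toLinearMap

lemma opS_apply (φ : A →ₐ[ZMod p] A) (C : Module.End (ZMod p) A) (j : ℕ) (h v : A) :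
    opS φ C j h v = (C ^ j) (h * φ v) := rfl

lemma opS_word_pow (φ : A →ₐ[ZMod p] A) (C : Module.End (ZMod p) A)
    (hC : ∀ a m, C (a ^ p * m) = a * C m) (j : ℕ) (gs : List A) (a w : A) :
    (gs.map (opS φ C j)).prod (a ^ ((p ^ j) ^ gs.length) * w) =
      φ^[gs.length] a * (gs.map (opS φ C j)).prod w := by
  induction gs generalizing a w with
  | nil => simp
  | cons g gs ih =>
    simp only [List.map_cons, List.prod_cons, List.length_cons, Module.End.mul_apply]
    rw [pow_succ', pow_mul, ih, iterate_map_pow, Function.iterate_succ_apply', opS_apply,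
      opS_apply, map_mul φ, map_pow φ, ← mul_assoc, mul_comm g, mul_assoc, cartier_iter C hC]

lemma shrink_one (φ : A →ₐ[ZMod p] A) (C : Module.End (ZMod p) A) (j : ℕ) (c : ℕ)
    (hx : Algebra.adjoin (ZMod p) (Set.range x) = ⊤)
    (hc : ∀ M a, a ∈ Fil (ZMod p) x (p ^ j * M + c) → (C ^ j) a ∈ Fil (ZMod p) x (M + c))
    (δ : ℕ) (hδ : ∀ N, ∀ a ∈ Fil (ZMod p) x N, φ a ∈ Fil (ZMod p) x (δ * N))
    (hQ : 2 * δ ≤ p ^ j) (h : A) : ∃ r, ∀ M, ∀ v ∈ Fil (ZMod p) x M,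
      opS φ C j h v ∈ Fil (ZMod p) x (M / 2 + r) := by
  have hp : p.Prime := Fact.out
  have hQ1 : 1 ≤ p ^ j := Nat.one_le_pow _ _ hp.pos
  obtain ⟨d, hd⟩ := exists_mem_Fil x hx h
  refine ⟨d + 1 + c, fun M v hv => ?_⟩
  rw [opS_apply, ← add_assoc]
  apply hc
  refine Fil_mono x ?_ (mul_mem_Fil x hd (hδ M v hv))
  have h1 : δ * M ≤ 2 * δ * (M / 2 + 1) := by
    calc δ * M ≤ δ * (2 * (M / 2 + 1)) := Nat.mul_le_mul_left _ (by omega)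
      _ = _ := by ring
  have h2 : 2 * δ * (M / 2 + 1) ≤ p ^ j * (M / 2 + 1) := Nat.mul_le_mul_right _ hQ
  have h3 : p ^ j * (M / 2 + (d + 1)) = p ^ j * (M / 2 + 1) + p ^ j * d := by ring
  have h4 : d ≤ p ^ j * d := Nat.le_mul_of_pos_left _ hQ1
  omega

lemma shrink_word (φ : A →ₐ[ZMod p] A) (C : Module.End (ZMod p) A) (j : ℕ) (c : ℕ)
    (hx : Algebra.adjoin (ZMod p) (Set.range x) = ⊤)
    (hc : ∀ M a, a ∈ Fil (ZMod p) x (p ^ j * M + c) → (C ^ j) a ∈ Fil (ZMod p) x (M + c))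
    (δ : ℕ) (hδ : ∀ N, ∀ a ∈ Fil (ZMod p) x N, φ a ∈ Fil (ZMod p) x (δ * N))
    (hQ : 2 * δ ≤ p ^ j) (gs : List A) (h : A) : ∃ r, ∀ M, ∀ v ∈ Fil (ZMod p) x M,
      ((gs.map (opS φ C j)).prod * opS φ C j h) v ∈ Fil (ZMod p) x (M / 2 + r) := by
  induction gs with
  | nil => simpa using shrink_one x φ C j c hx hc δ hδ hQ h
  | cons g gs ih =>
    obtain ⟨r, hr⟩ := ih
    obtain ⟨s, hs⟩ := shrink_one x φ C j c hx hc δ hδ hQ g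
    refine ⟨r + s, fun M v hv => ?_⟩
    rw [List.map_cons, List.prod_cons, mul_assoc, Module.End.mul_apply]
    refine Fil_mono x ?_ (hs _ _ (hr M v hv))
    omega

/-- The trace of a word vanishes on the ideal. -/
lemma trace_word_zero (φ : A →ₐ[ZMod p] A) (C : Module.End (ZMod p) A)
    (hC : ∀ a m, C (a ^ p * m) = a * C m) (j : ℕ) (c : ℕ)
    (hx : Algebra.adjoin (ZMod p) (Set.range x) = ⊤)
    (hc : ∀ M a, a ∈ Fil (ZMod p) x (p ^ j * M + c) → (C ^ j) a ∈ Fil (ZMod p) x (M + c))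
    (δ : ℕ) (hδ : ∀ N, ∀ a ∈ Fil (ZMod p) x N, φ a ∈ Fil (ZMod p) x (δ * N))
    (hQ : 2 * δ ≤ p ^ j) (gs : List A) (h : A)
    (hh : h ∈ Ideal.span (Set.range fun a : A =>
      φ^[gs.length + 1] a - a ^ (p ^ j) ^ (gs.length + 1))) :
    ∃ N₀, ∀ N, N₀ ≤ N → LinearMap.trace (ZMod p) (Fil (ZMod p) x N)
      (compW (Fil (ZMod p) x N) ((gs.map (opS φ C j)).prod * opS φ C j h)) = 0 := by
  set U := (gs.map (opS φ C j)).prod with hU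
  have hadd : ∀ a b, opS φ C j (a + b) = opS φ C j a + opS φ C j b := by
    intro a b; ext v; simp [opS_apply, add_mul]
  have hsub : ∀ a b, opS φ C j (a - b) = opS φ C j a - opS φ C j b := by
    intro a b; ext v; simp [opS_apply, sub_mul]
  have hcadd : ∀ (W : Submodule (ZMod p) A) S T, compW W (S + T) = compW W S + compW W T := by
    intro W S T; ext v; simp [compW]
  have hcsub : ∀ (W : Submodule (ZMod p) A) S T, compW W (S - T) = compW W S - compW W T := by
    intro W S T; ext v; simp [compW]
  suffices ∀ e, ∃ N₀, ∀ N, N₀ ≤ N → LinearMap.trace (ZMod p) (Fil (ZMod p) x N)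
      (compW (Fil (ZMod p) x N) (U * opS φ C j (e * h))) = 0 by
    simpa using this 1
  induction hh using Submodule.span_induction with
  | zero =>
    intro e
    refine ⟨0, fun N _ => ?_⟩
    have : opS φ C j (e * 0) = 0 := by ext v; simp [opS_apply]
    rw [this, mul_zero]
    have : compW (Fil (ZMod p) x N) 0 = 0 := by ext v; simp [compW]
    rw [this, map_zero]
  | add a b _ _ iha ihb =>
    intro e
    obtain ⟨N₁, h₁⟩ := iha e
    obtain ⟨N₂, h₂⟩ := ihb e
    refine ⟨max N₁ N₂, fun N hN => ?_⟩
    rw [mul_add, hadd, mul_add, hcadd, map_add, h₁ N (le_of_max_le_left hN),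
      h₂ N (le_of_max_le_right hN), add_zero]
  | smul a b _ ih =>
    intro e
    obtain ⟨N₁, h₁⟩ := ih (e * a)
    exact ⟨N₁, fun N hN => by rw [smul_eq_mul, ← mul_assoc, h₁ N hN]⟩
  | mem y hy =>
    obtain ⟨a, rfl⟩ := hy
    intro e
    set a' := φ^[gs.length] a with ha'
    let m : Module.End (ZMod p) A := LinearMap.mulLeft (ZMod p) a'
    have e1 : U * opS φ C j (e * φ^[gs.length + 1] a) = (U * opS φ C j e) * m := by
      ext v
      simp only [Module.End.mul_apply, m, LinearMap.mulLeft_apply, opS_apply, map_mul,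
        Function.iterate_succ_apply', mul_assoc, ha']
    have e2 : U * opS φ C j (e * a ^ (p ^ j) ^ (gs.length + 1)) = m * (U * opS φ C j e) := by
      ext v
      simp only [Module.End.mul_apply, m, LinearMap.mulLeft_apply, ha', hU]
      rw [← opS_word_pow φ C hC, opS_apply, opS_apply]
      congr 1
      have e3 : a ^ (p ^ j) ^ (gs.length + 1) = (a ^ (p ^ j) ^ gs.length) ^ p ^ j := by
        rw [← pow_mul a, ← pow_succ]
      rw [← cartier_iter C hC, e3]
      congr 1
      ring
    obtain ⟨d, hd⟩ := exists_mem_Fil (k := ZMod p) x hx a'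
    obtain ⟨r, hr⟩ := shrink_word x φ C j c hx hc δ hδ hQ gs e
    refine ⟨3 * d + 2 * r + 2, fun N hN => ?_⟩
    simp only []
    rw [mul_sub, hsub, mul_sub, hcsub, map_sub, e1, e2, sub_eq_zero]
    apply trW_comm _ (Fil (ZMod p) x (d + N)) (Fil_mono x (by omega))
    · intro v hv
      exact mul_mem_Fil x hd hv
    · intro v hv
      exact Fil_mono x (by omega) (hr _ v hv)
    · intro v hv
      exact Fil_mono x (by omega) (mul_mem_Fil x hd (hr _ v hv))
end

theorem core (p : ℕ) [Fact p.Prime] (K : Type*) [Field K] [Algebra (ZMod p) K]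
    [IsAlgClosure (ZMod p) K] {A : Type*} [CommRing A] [IsDomain A] [Algebra (ZMod p) A]
    [hft : Algebra.FiniteType (ZMod p) A] (φ : A →ₐ[ZMod p] A) (hφ : Function.Injective φ)
    (D : A) (hD : D ≠ 0) :
    ∃ (β : A →+* K) (b : ℕ), 1 ≤ b ∧ (∀ a, β (φ^[b] a) = β a) ∧ ∀ n, β (φ^[n] D) ≠ 0 := by
  classical
  by_contra hcon
  push Not at hcon
  have hp : p.Prime := Fact.out
  obtain ⟨n, f, hf⟩ := Algebra.FiniteType.iff_quotient_mvPolynomial''.1 hft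
  let x : Fin n → A := fun i => f (MvPolynomial.X i)
  have hx : Algebra.adjoin (ZMod p) (Set.range x) = ⊤ := by
    have h1 : Set.range x = f '' (Set.range MvPolynomial.X) := by
      rw [← Set.range_comp]; rfl
    rw [h1, ← AlgHom.map_adjoin, MvPolynomial.adjoin_range_X, Algebra.map_top]
    exact (AlgHom.range_eq_top f).2 hf
  obtain ⟨C, hC1, hC⟩ := exists_cartier x hx
  obtain ⟨c, hc⟩ := cartier_degree x hx C hC
  obtain ⟨δ, hδ⟩ := exists_stretch x hx φ
  obtain ⟨L, hnL, hL⟩ := exists_growth (k := ZMod p) x c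
  set L' := L + c + 1 with hL'
  let V := Fil (ZMod p) x L'
  have : Nontrivial V :=
    ⟨⟨1, one_mem_Fil x _⟩, 0, fun h => one_ne_zero (congrArg Subtype.val h)⟩
  obtain ⟨B, hB⟩ := exists_word_bound (ZMod p) V
  have hE := fun b : ℕ => unif_nilp p K φ.toRingHom hφ D hD hcon (b + 1) (by omega)
  choose Eb hEb0 j₀ hEb using hE
  let E : A := ∏ b ∈ Finset.range B, Eb b
  have hE0 : E ≠ 0 := Finset.prod_ne_zero_iff.2 fun b _ => hEb0 b
  obtain ⟨e, he⟩ := exists_mem_Fil (k := ZMod p) x hx E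
  let j := (∑ b ∈ Finset.range B, j₀ b) + 2 * δ + (e + δ * L' + δ)
  have hjb : ∀ b < B, j₀ b ≤ j := fun b hb => by
    have := Finset.single_le_sum (f := j₀) (fun _ _ => Nat.zero_le _) (Finset.mem_range.2 hb)
    omega
  have hjQ : j < p ^ j := Nat.lt_pow_self hp.one_lt
  set Q := p ^ j with hQ
  have hEI : ∀ b < B, E ∈ Ideal.span (Set.range fun a : A => φ^[b + 1] a - a ^ Q ^ (b + 1)) := by
    intro b hb
    exact Ideal.mem_of_dvd _ (Finset.dvd_prod_of_mem _ (Finset.mem_range.2 hb))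
      (hEb b j (hjb b hb))
  have hT : ∀ g ∈ Fil (ZMod p) x (L * Q), ∀ M, L' ≤ M → ∀ v ∈ Fil (ZMod p) x (M + 1),
      opS φ C j (E * g) v ∈ Fil (ZMod p) x M := by
    intro g hg M hM v hv
    rw [opS_apply]
    obtain ⟨t, rfl⟩ := Nat.exists_eq_add_of_le hM
    have : L' + t = (L + 1 + t) + c := by omega
    rw [this]
    apply hc
    refine Fil_mono x ?_ (mul_mem_Fil x (mul_mem_Fil x he hg) (hδ _ v hv))
    have h1 : e + δ * (L' + t + 1) ≤ (e + δ * L' + δ) * (t + 1) := by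
      nlinarith [Nat.zero_le (e * t), Nat.zero_le (δ * L' * t)]
    have h2 : (e + δ * L' + δ) * (t + 1) ≤ Q * (t + 1) := Nat.mul_le_mul_right _ (by omega)
    have h3 : Q * (L + 1 + t) = L * Q + Q * (t + 1) := by ring
    rw [← hQ, h3]
    omega
  have hTV : ∀ g ∈ Fil (ZMod p) x (L * Q), ∀ M, L' ≤ M → ∀ v ∈ Fil (ZMod p) x M,
      opS φ C j (E * g) v ∈ Fil (ZMod p) x M := fun g hg M hM v hv =>
    hT g hg M hM v (Fil_mono x (Nat.le_succ _) hv)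
  let R : A → Module.End (ZMod p) V := fun g => compW V (opS φ C j (E * g))
  have hR : ∀ g ∈ Fil (ZMod p) x (L * Q), ∀ v : V, (R g v : A) = opS φ C j (E * g) v :=
    fun g hg v => compW_apply V _ v (hTV g hg L' le_rfl v v.2)
  obtain ⟨l, hl0, hlB, hlS, hltr⟩ := hB (R '' (Fil (ZMod p) x (L * Q) : Set A)) (by
    intro v hv
    have hv' : E * φ v ≠ 0 := mul_ne_zero hE0 fun h => hv (Subtype.ext (hφ (by simpa using h)))
    obtain ⟨g₀, hg₀, hw⟩ := cartier_nonzero_mon x hx C hC1 hC j _ hv'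
    set w := (C ^ j) (g₀ * (E * φ v)) with hwdef
    have hag : ∀ a ∈ Fil (ZMod p) x (L - n), a ^ Q * g₀ ∈ Fil (ZMod p) x (L * Q) := by
      intro a ha
      refine Fil_mono x (le_of_eq ?_) (mul_mem_Fil x (pow_mem_Fil x ha Q) hg₀)
      rw [mul_comm n, ← mul_add, Nat.sub_add_cancel hnL, mul_comm]
    have hval : ∀ a ∈ Fil (ZMod p) x (L - n), a * w = (R (a ^ Q * g₀) v : A) := by
      intro a ha
      rw [hR _ (hag a ha), opS_apply, hwdef, ← cartier_iter C hC]
      congr 1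
      ring
    let θ : Fil (ZMod p) x (L - n) →ₗ[ZMod p] V :=
      projW V ∘ₗ LinearMap.mulRight (ZMod p) w ∘ₗ Submodule.subtype _
    have hθ : ∀ a, θ a = R ((a : A) ^ Q * g₀) v := by
      intro a
      change projW V ((a : A) * w) = _
      rw [hval a a.2, projW_apply V _ (R ((a : A) ^ Q * g₀) v).2]
    have hθm : ∀ a, θ a ∈ Submodule.span (ZMod p)
        ((fun s : Module.End (ZMod p) V => s v) '' (R '' (Fil (ZMod p) x (L * Q) : Set A))) := by
      intro a
      rw [hθ]
      exact Submodule.subset_span ⟨_, ⟨_, hag a a.2, rfl⟩, rfl⟩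
    refine lt_of_lt_of_le hL (Nat.mul_le_mul_left 2 ?_)
    refine LinearMap.finrank_le_finrank_of_injective (f := LinearMap.codRestrict _ θ hθm) ?_
    intro a b hab
    have h1 : θ a = θ b := congrArg Subtype.val hab
    rw [hθ, hθ] at h1
    have h2 := congrArg Subtype.val h1
    rw [← hval a a.2, ← hval b b.2] at h2
    exact Subtype.ext (mul_right_cancel₀ hw h2))
  obtain ⟨gs, hgs, rfl⟩ : ∃ gs : List A, (∀ g ∈ gs, g ∈ Fil (ZMod p) x (L * Q)) ∧
      gs.map R = l := by
    clear hl0 hlB hltr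
    induction l with
    | nil => exact ⟨[], by simp, rfl⟩
    | cons s l ih =>
      obtain ⟨gs, h1, h2⟩ := ih fun s hs => hlS s (List.mem_cons_of_mem _ hs)
      obtain ⟨g, hg, hgs⟩ := hlS s List.mem_cons_self
      refine ⟨g :: gs, ?_, by simp [h2, hgs]⟩
      intro g' hg'
      rcases List.mem_cons.1 hg' with rfl | h
      · exact hg
      · exact h1 _ h
  have hword : ∀ gs : List A, (∀ g ∈ gs, g ∈ Fil (ZMod p) x (L * Q)) → ∀ v : V,
      ((gs.map R).prod v : A) = ((gs.map (E * ·)).map (opS φ C j)).prod (v : A) := by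
    intro gs
    induction gs with
    | nil => intro _ v; simp
    | cons g gs ih =>
      intro h v
      simp only [List.map_cons, List.prod_cons, Module.End.mul_apply]
      rw [hR g (h g List.mem_cons_self), ih fun g' hg' => h g' (List.mem_cons_of_mem _ hg')]
  have hcomp : (gs.map R).prod = compW V ((gs.map (E * ·)).map (opS φ C j)).prod := by
    ext v
    rw [compW_apply]
    · exact hword gs hgs v
    · rw [← hword gs hgs v]
      exact Subtype.property _
  rw [hcomp] at hltr
  rcases List.eq_nil_or_concat gs with rfl | ⟨init, g, rfl⟩
  · simp at hl0
  have hinit : ∀ M, L' ≤ M → ∀ v ∈ Fil (ZMod p) x M,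
      ((init.map (E * ·)).map (opS φ C j)).prod v ∈ Fil (ZMod p) x M := by
    intro M hM
    have hi : ∀ g ∈ init, g ∈ Fil (ZMod p) x (L * Q) := fun g' hg' => hgs g' (by simp [hg'])
    clear hgs hcomp hltr hlS hlB hl0
    induction init with
    | nil => intro v hv; simpa using hv
    | cons g' t ih =>
      intro v hv
      simp only [List.map_cons, List.prod_cons, Module.End.mul_apply]
      exact hTV g' (hi g' List.mem_cons_self) M hM _
        (ih (fun a ha => hi a (List.mem_cons_of_mem _ ha)) v hv)
  have hprod : (((init.concat g).map (E * ·)).map (opS φ C j)).prod =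
      ((init.map (E * ·)).map (opS φ C j)).prod * opS φ C j (E * g) := by
    simp
  rw [hprod] at hltr
  set T := ((init.map (E * ·)).map (opS φ C j)).prod * opS φ C j (E * g) with hTdef
  have hg : g ∈ Fil (ZMod p) x (L * Q) := hgs g (by simp)
  have hconst : ∀ t, LinearMap.trace (ZMod p) (Fil (ZMod p) x (L' + t))
      (compW (Fil (ZMod p) x (L' + t)) T) = LinearMap.trace (ZMod p) V (compW V T) := by
    intro t
    induction t with
    | zero => rfl
    | succ t ih =>
      rw [← ih]
      symm
      apply trW_mono _ _ (Fil_mono x (by omega))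
      intro v hv
      exact hinit _ (by omega) _ (hT g hg _ (by omega) v hv)
  have hlen : init.length < B := by
    simp at hlB
    omega
  obtain ⟨N₀, hN₀⟩ := trace_word_zero x φ C hC j c hx (hc j) δ hδ (by omega)
    (init.map (E * ·)) (E * g) (by
      rw [List.length_map]
      exact Ideal.mul_mem_right _ _ (hEI _ hlen))
  apply hltr
  rw [← hconst N₀]
  exact hN₀ _ (by omega)

lemma exists_coeffs (k : Type*) {K B : Type*} [Field k] [Field K] [Algebra k K] [CommRing B]
    [Algebra K B] [Algebra k B] [IsScalarTower k K B] (s : Set B)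
    (hs : Algebra.adjoin K s = ⊤) (a : B) :
    ∃ c : Finset K, a ∈ Algebra.adjoin k (s ∪ algebraMap K B '' c) := by
  classical
  have ha : a ∈ Algebra.adjoin K s := hs ▸ Algebra.mem_top
  have hmono : ∀ c d : Finset K, c ⊆ d → Algebra.adjoin k (s ∪ algebraMap K B '' c) ≤
      Algebra.adjoin k (s ∪ algebraMap K B '' d) := fun c d h =>
    Algebra.adjoin_mono (Set.union_subset_union_right _ (Set.image_mono (Finset.coe_subset.2 h)))
  induction ha using Algebra.adjoin_induction with
  | mem y hy => exact ⟨∅, Algebra.subset_adjoin (Or.inl hy)⟩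
  | algebraMap r => exact ⟨{r}, Algebra.subset_adjoin (Or.inr ⟨r, by simp, rfl⟩)⟩
  | add a b _ _ iha ihb =>
    obtain ⟨c, hc⟩ := iha
    obtain ⟨d, hd⟩ := ihb
    exact ⟨c ∪ d, Subalgebra.add_mem _ (hmono _ _ Finset.subset_union_left hc)
      (hmono _ _ Finset.subset_union_right hd)⟩
  | mul a b _ _ iha ihb =>
    obtain ⟨c, hc⟩ := iha
    obtain ⟨d, hd⟩ := ihb
    exact ⟨c ∪ d, Subalgebra.mul_mem _ (hmono _ _ Finset.subset_union_left hc)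
      (hmono _ _ Finset.subset_union_right hd)⟩

theorem coreK (p : ℕ) [Fact p.Prime] (K : Type*) [Field K] [Algebra (ZMod p) K]
    [IsAlgClosure (ZMod p) K] {B : Type*} [CommRing B] [IsDomain B] [Algebra K B]
    [hft : Algebra.FiniteType K B] (φ : B →ₐ[K] B) (hφ : Function.Injective φ)
    (D : B) (hD : D ≠ 0) :
    ∃ (β : B →ₐ[K] K) (b : ℕ), 1 ≤ b ∧ (∀ a, β (φ^[b] a) = β a) ∧ ∀ n, β (φ^[n] D) ≠ 0 := by
  classical
  have : IsAlgClosed K := IsAlgClosure.isAlgClosed (ZMod p)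
  have : Algebra.IsAlgebraic (ZMod p) K := IsAlgClosure.isAlgebraic
  let _ : Algebra (ZMod p) B := ((algebraMap K B).comp (algebraMap (ZMod p) K)).toAlgebra
  have : IsScalarTower (ZMod p) K B := IsScalarTower.of_algebraMap_eq fun _ => rfl
  obtain ⟨s, hs⟩ := hft.out
  choose cf hcf using exists_coeffs (ZMod p) (K := K) (s : Set B) hs
  let c : Finset K := (s.biUnion fun y => cf (φ y)) ∪ cf D
  let G : Set B := (s : Set B) ∪ algebraMap K B '' c
  let B₀ : Subalgebra (ZMod p) B := Algebra.adjoin (ZMod p) G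
  have hmono : ∀ d : Finset K, d ⊆ c → Algebra.adjoin (ZMod p) ((s : Set B) ∪ algebraMap K B '' d) ≤
      B₀ := fun d h =>
    Algebra.adjoin_mono (Set.union_subset_union_right _ (Set.image_mono (Finset.coe_subset.2 h)))
  have hDB : D ∈ B₀ := hmono _ Finset.subset_union_right (hcf D)
  have hsB : ∀ y ∈ s, y ∈ B₀ := fun y hy => Algebra.subset_adjoin (Or.inl hy)
  have hφs : ∀ y ∈ s, φ y ∈ B₀ := fun y hy =>
    hmono _ ((Finset.subset_biUnion_of_mem (fun y => cf (φ y)) hy).trans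
      Finset.subset_union_left) (hcf (φ y))
  let φz : B →ₐ[ZMod p] B := φ.restrictScalars (ZMod p)
  have hφB : ∀ y ∈ B₀, φ y ∈ B₀ := by
    suffices B₀ ≤ B₀.comap φz from this
    refine Algebra.adjoin_le ?_
    rintro y (hy | ⟨r, hr, rfl⟩)
    · exact hφs y hy
    · change φ (algebraMap K B r) ∈ B₀
      rw [AlgHom.commutes]
      exact Algebra.subset_adjoin (Or.inr ⟨r, hr, rfl⟩)
  have hGfin : G.Finite := s.finite_toSet.union (c.finite_toSet.image _)
  have : Algebra.FiniteType (ZMod p) B₀ :=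
    B₀.fg_iff_finiteType.1 ⟨hGfin.toFinset, by rw [Set.Finite.coe_toFinset]⟩
  let φ₀ : B₀ →ₐ[ZMod p] B₀ := (φz.comp B₀.val).codRestrict B₀ fun y => hφB y y.2
  have hφ₀v : ∀ y : B₀, (φ₀ y : B) = φ y := fun y => rfl
  have hφ₀it : ∀ n (y : B₀), ((φ₀^[n] y : B₀) : B) = φ^[n] (y : B) := by
    intro n
    induction n with
    | zero => intro y; rfl
    | succ n ih => intro y; rw [Function.iterate_succ_apply, ih, Function.iterate_succ_apply]; rfl
  have hφ₀ : Function.Injective φ₀ := fun y z h => Subtype.ext (hφ (congrArg Subtype.val h))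
  obtain ⟨β₀, b, hb, hper, hne⟩ := core p K φ₀ hφ₀ ⟨D, hDB⟩ fun h => hD (congrArg Subtype.val h)
  let β₁ : B₀ →ₐ[ZMod p] K := 
    { β₀ with commutes' := fun r => RingHom.congr_fun (Subsingleton.elim
        (β₀.comp (algebraMap (ZMod p) B₀)) (algebraMap (ZMod p) K)) r }
  let q : Ideal B₀ := RingHom.ker β₀
  have hq : q.IsMaximal := by
    apply Ideal.Quotient.maximal_of_isField
    have h1 : IsField β₁.range := Subalgebra.isField_of_algebraic _
    exact (RingHom.quotientKerEquivRange β₀).toMulEquiv.isField h1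
  have hinteg : Algebra.IsIntegral B₀ B := by
    constructor
    intro y
    have hy : y ∈ Algebra.adjoin K (s : Set B) := hs ▸ Algebra.mem_top
    induction hy using Algebra.adjoin_induction with
    | mem y hy => exact isIntegral_algebraMap (x := (⟨y, hsB y hy⟩ : B₀))
    | algebraMap r =>
      have h1 : IsIntegral (ZMod p) r := Algebra.IsIntegral.isIntegral r
      have h2 : IsIntegral (ZMod p) (algebraMap K B r) := h1.algebraMap
      exact h2.tower_top
    | add a b _ _ iha ihb => exact iha.add ihb
    | mul a b _ _ iha ihb => exact iha.mul ihb
  obtain ⟨Q, hQm, hQ⟩ := Ideal.exists_ideal_over_maximal_of_isIntegral (S := B) q (by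
    intro y hy
    have : y = 0 := Subtype.ext hy
    rw [this]; exact q.zero_mem)
  let _ : Field (B ⧸ Q) := Ideal.Quotient.field Q
  have : Module.Finite K (B ⧸ Q) := finite_of_finite_type_of_isJacobsonRing _ _
  have hbij : Function.Bijective (algebraMap K (B ⧸ Q)) :=
    IsAlgClosed.algebraMap_bijective_of_isIntegral
  let e : K ≃ₐ[K] (B ⧸ Q) := AlgEquiv.ofBijective (Algebra.ofId K (B ⧸ Q)) hbij
  let γ : B →ₐ[K] K := (e.symm : (B ⧸ Q) →ₐ[K] K).comp (Ideal.Quotient.mkₐ K Q)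
  have hγ : ∀ y : B₀, γ y = 0 ↔ β₀ y = 0 := by
    intro y
    have h1 : γ y = 0 ↔ (y : B) ∈ Q := by
      change e.symm (Ideal.Quotient.mk Q (y : B)) = 0 ↔ _
      rw [map_eq_zero_iff e.symm e.symm.injective, Ideal.Quotient.eq_zero_iff_mem]
    rw [h1, ← RingHom.mem_ker]
    change (y : B) ∈ Q ↔ y ∈ q
    rw [← hQ]
    rfl
  refine ⟨γ, b, hb, ?_, ?_⟩
  · have : γ.comp (φ ^ b) = γ := by
      refine AlgHom.ext_of_adjoin_eq_top hs fun y hy => ?_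
      have h1 := (hγ (φ₀^[b] ⟨y, hsB y hy⟩ - ⟨y, hsB y hy⟩)).2 (by
        rw [map_sub, hper, sub_self])
      rw [AddSubgroupClass.coe_sub, map_sub, sub_eq_zero, hφ₀it] at h1
      simpa [AlgHom.coe_pow] using h1
    intro a
    have h := AlgHom.congr_fun this a
    simpa [AlgHom.coe_pow] using h
  · intro n h
    apply hne n
    rw [← hγ, hφ₀it]
    exact h

theorem coreK' (p : ℕ) [Fact p.Prime] (K : Type*) [Field K] [Algebra (ZMod p) K]
    [IsAlgClosure (ZMod p) K] {B : Type*} [CommRing B] [IsDomain B] [Algebra K B]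
    [hft : Algebra.FiniteType K B] (φ : B →ₐ[K] B)
    (D : B) (hD : ∀ n, φ^[n] D ≠ 0) :
    ∃ (β : B →ₐ[K] K) (b : ℕ), 1 ≤ b ∧ (∀ a, β (φ^[b] a) = β a) ∧ ∀ n, β (φ^[n] D) ≠ 0 := by
  classical
  have : IsNoetherianRing B := Algebra.FiniteType.isNoetherianRing K B
  have hcoe : ∀ n a, (φ ^ n) a = φ^[n] a := fun n a => by rw [AlgHom.coe_pow]
  let kr : ℕ →o Ideal B := ⟨fun n => RingHom.ker (φ ^ n), monotone_nat_of_le_succ fun n z hz => by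
    rw [RingHom.mem_ker, hcoe] at hz ⊢
    rw [Function.iterate_succ_apply', hz, map_zero]⟩
  obtain ⟨n₀, hn₀⟩ := monotone_stabilizes_iff_noetherian.2 ‹_› kr
  let π : B →ₐ[K] B := φ ^ n₀
  have hπ : ∀ a, π a = φ^[n₀] a := hcoe n₀
  let B' : Subalgebra K B := π.range
  have hcomm : ∀ a, φ (π a) = π (φ a) := fun a => by
    rw [hπ, hπ, ← Function.iterate_succ_apply' φ, Function.iterate_succ_apply]
  let φ' : B' →ₐ[K] B' := (φ.comp B'.val).codRestrict B' (by
    rintro ⟨_, y, rfl⟩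
    exact ⟨φ y, (hcomm y).symm⟩)
  have hφ' : Function.Injective φ' := by
    rw [injective_iff_map_eq_zero]
    rintro ⟨_, y, rfl⟩ h
    have h1 : φ (π y) = 0 := congrArg Subtype.val h
    have h2 : y ∈ kr (n₀ + 1) := by
      change (φ ^ (n₀ + 1)) y = 0
      rw [hcoe, Function.iterate_succ_apply', ← hπ, h1]
    rw [← hn₀ (n₀ + 1) (Nat.le_succ _)] at h2
    exact Subtype.ext h2
  have : Algebra.FiniteType K B' := Algebra.FiniteType.of_surjective π.rangeRestrict
    π.rangeRestrict_surjective
  let ρ : B →ₐ[K] B' := π.rangeRestrict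
  have hρ : ∀ n a, ρ (φ^[n] a) = φ'^[n] (ρ a) := by
    intro n
    induction n with
    | zero => intro a; rfl
    | succ n ih =>
      intro a
      rw [Function.iterate_succ_apply, ih, Function.iterate_succ_apply]
      congr 1
      exact Subtype.ext (hcomm a).symm
  obtain ⟨β, b, hb, h1, h2⟩ := coreK p K φ' hφ' (ρ D) (by
    intro h
    apply hD n₀
    rw [← hπ]
    exact congrArg Subtype.val h)
  refine ⟨β.comp ρ, b, hb, fun a => ?_, fun n => ?_⟩
  · rw [AlgHom.comp_apply, AlgHom.comp_apply, hρ, h1]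
  · rw [AlgHom.comp_apply, hρ]
    exact h2 n

lemma ext_loc {K P R k : Type*} [Field K] [CommRing P] [Algebra K P] [CommRing R] [Algebra K R]
    [Field k] [Algebra K k] (B : Subalgebra K P) (t : P) (ht : t ∈ B) (β : B →ₐ[K] k)
    (hβ : β ⟨t, ht⟩ ≠ 0) (c : R →ₐ[K] P) (hc : ∀ a, ∃ m, t ^ m * c a ∈ B) :
    ∃ γ : R →ₐ[K] k, ∀ a m (hm : t ^ m * c a ∈ B), β ⟨_, hm⟩ = β ⟨t, ht⟩ ^ m * γ a := by
  choose e he using hc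
  set τ := β ⟨t, ht⟩ with hτ
  have hkey : ∀ a m (hm : t ^ m * c a ∈ B) l (hl : t ^ l * c a ∈ B),
      τ ^ l * β ⟨_, hm⟩ = τ ^ m * β ⟨_, hl⟩ := by
    intro a m hm l hl
    rw [hτ, ← map_pow, ← map_pow, ← map_mul, ← map_mul]
    congr 1
    apply Subtype.ext
    change t ^ l * (t ^ m * c a) = t ^ m * (t ^ l * c a)
    ring
  let γ : R → k := fun a => β ⟨_, he a⟩ / τ ^ e a
  have hγ : ∀ a m (hm : t ^ m * c a ∈ B), β ⟨_, hm⟩ = τ ^ m * γ a := by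
    intro a m hm
    have := hkey a m hm _ (he a)
    simp only [γ]
    rw [mul_div_assoc', eq_div_iff (pow_ne_zero _ hβ), ← this, mul_comm]
  have huniq : ∀ a m (hm : t ^ m * c a ∈ B) z, β ⟨_, hm⟩ = τ ^ m * z → γ a = z := by
    intro a m hm z h
    rw [hγ a m hm] at h
    exact mul_left_cancel₀ (pow_ne_zero _ hβ) h
  refine ⟨
    { toFun := γ
      map_one' := ?_
      map_mul' := ?_
      map_zero' := ?_
      map_add' := ?_
      commutes' := ?_ }, hγ⟩
  · refine huniq 1 0 (by simp [B.one_mem]) 1 ?_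
    exact (congrArg β (Subtype.ext (by simp) : _ = (1 : B))).trans (by simp)
  · intro a b
    have hm : t ^ (e a + e b) * c (a * b) ∈ B := by
      have := B.mul_mem (he a) (he b)
      rw [map_mul]; convert this using 1; ring
    refine huniq _ _ hm _ ?_
    have h1 : β ⟨_, hm⟩ = β ⟨_, he a⟩ * β ⟨_, he b⟩ := by
      rw [← map_mul]
      congr 1
      apply Subtype.ext
      change t ^ (e a + e b) * c (a * b) = (t ^ e a * c a) * (t ^ e b * c b)
      rw [map_mul]; ring
    rw [h1, hγ a _ (he a), hγ b _ (he b)]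
    ring
  · refine huniq 0 0 (by simp [B.zero_mem]) 0 ?_
    exact (congrArg β (Subtype.ext (by simp) : _ = (0 : B))).trans (by simp)
  · intro a b
    have hm : t ^ (e a + e b) * c (a + b) ∈ B := by
      have := B.add_mem (B.mul_mem (B.pow_mem ht (e b)) (he a))
        (B.mul_mem (B.pow_mem ht (e a)) (he b))
      rw [map_add]; convert this using 1; ring
    refine huniq _ _ hm _ ?_
    have h1 : β ⟨_, hm⟩ = τ ^ e b * β ⟨_, he a⟩ + τ ^ e a * β ⟨_, he b⟩ := by
      rw [hτ, ← map_pow, ← map_pow, ← map_mul, ← map_mul, ← map_add]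
      congr 1
      apply Subtype.ext
      change t ^ (e a + e b) * c (a + b) = t ^ e b * (t ^ e a * c a) + t ^ e a * (t ^ e b * c b)
      rw [map_add]; ring
    rw [h1, hγ a _ (he a), hγ b _ (he b)]
    ring
  · intro r
    refine huniq _ 0 (by simp [B.algebraMap_mem]) _ ?_
    exact (congrArg β (Subtype.ext (by simp) : _ = algebraMap K B r)).trans
      ((β.commutes r).trans (by simp))

lemma exists_pow_mem {K P R : Type*} [Field K] [CommRing P] [Algebra K P] [CommRing R]
    [Algebra K R] (B : Subalgebra K P) (t : P) (ht : t ∈ B) (c : R →ₐ[K] P) (g : Set R)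
    (h : ∀ x ∈ g, t * c x ∈ B) (a : R) (ha : a ∈ Algebra.adjoin K g) :
    ∃ m : ℕ, t ^ m * c a ∈ B := by
  induction ha using Algebra.adjoin_induction with
  | mem x hx => exact ⟨1, by simpa using h x hx⟩
  | algebraMap r => exact ⟨0, by simp [B.algebraMap_mem]⟩
  | add a b _ _ iha ihb =>
    obtain ⟨m, hm⟩ := iha
    obtain ⟨l, hl⟩ := ihb
    refine ⟨m + l, ?_⟩
    have := B.add_mem (B.mul_mem (B.pow_mem ht l) hm) (B.mul_mem (B.pow_mem ht m) hl)
    rw [map_add]; convert this using 1; ring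
  | mul a b _ _ iha ihb =>
    obtain ⟨m, hm⟩ := iha
    obtain ⟨l, hl⟩ := ihb
    refine ⟨m + l, ?_⟩
    have := B.mul_mem hm hl
    rw [map_mul]; convert this using 1; ring

lemma exists_partition {K F P ι : Type*} [Field K] [Field F] [Algebra K F] [CommRing P]
    [Algebra K P] [Fintype ι] (φ : F →ₐ[K] F) (A : ι → Subalgebra K F) (g : ι → Finset F)
    (hg : ∀ i, Algebra.adjoin K (g i : Set F) = A i)
    (hstar : ∀ i (q : Ideal (A i)), q.IsPrime → ∃ j, ∀ a ∈ A j, ∃ v : A i, v ∉ q ∧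
      (v : F) * φ a ∈ A i)
    (C : F →ₐ[K] P) (t : ι → P) (hsum : ∑ i, t i = 1) (B : Subalgebra K P) (ht : ∀ i, t i ∈ B)
    (hB : ∀ i, ∀ x ∈ g i, t i * C x ∈ B) :
    ∃ t' : ι → B, ∑ i, t' i = 1 ∧ ∀ i, ∀ x ∈ g i, (t' i : P) * C (φ x) ∈ B := by
  classical
  let 𝔞 : ι → Ideal B := fun j =>
    { carrier := {z | ∀ x ∈ g j, (z : P) * C (φ x) ∈ B}
      add_mem' := fun {y z} hy hz x hx => by
        have := B.add_mem (hy x hx) (hz x hx)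
        rw [← add_mul] at this
        exact this
      zero_mem' := fun x hx => by simp [B.zero_mem]
      smul_mem' := fun r z hz x hx => by
        have := B.mul_mem r.2 (hz x hx)
        rw [← mul_assoc] at this
        exact this }
  have htop : ⨆ j, 𝔞 j = ⊤ := by
    by_contra hne
    obtain ⟨𝔭, hmax, hle⟩ := Ideal.exists_le_maximal _ hne
    let β : B →ₐ[K] B ⧸ 𝔭 := Ideal.Quotient.mkₐ K 𝔭
    let _ : Field (B ⧸ 𝔭) := Ideal.Quotient.field 𝔭
    have hβ : ∀ z : B, β z = 0 ↔ z ∈ 𝔭 := fun z => Ideal.Quotient.eq_zero_iff_mem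
    obtain ⟨i, hi⟩ : ∃ i, (⟨t i, ht i⟩ : B) ∉ 𝔭 := by
      by_contra! hall
      apply hmax.ne_top
      rw [Ideal.eq_top_iff_one]
      have : (1 : B) = ∑ i, (⟨t i, ht i⟩ : B) := Subtype.ext (by
        rw [AddSubmonoidClass.coe_finsetSum]; exact hsum.symm)
      rw [this]
      exact Ideal.sum_mem _ fun i _ => hall i
    have hpow : ∀ a : A i, ∃ m, t i ^ m * (C.comp (A i).val) a ∈ B := fun a =>
      exists_pow_mem B (t i) (ht i) C (g i) (hB i) a (by rw [hg]; exact a.2)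
    have hti : β ⟨t i, ht i⟩ ≠ 0 := fun h => hi ((hβ _).1 h)
    obtain ⟨γ, hγ⟩ := ext_loc B (t i) (ht i) β hti (C.comp (A i).val) hpow
    obtain ⟨j, hj⟩ := hstar i (RingHom.ker γ) (RingHom.ker_isPrime γ)
    have hgA : ∀ x ∈ g j, x ∈ A j := fun x hx => by
      rw [← hg]; exact Algebra.subset_adjoin hx
    choose! v hv1 hv2 using hj
    let w : A i := ∏ x ∈ g j, v x
    have hw : γ w ≠ 0 := by
      rw [map_prod]
      exact Finset.prod_ne_zero_iff.2 fun x hx => hv1 x (hgA x hx)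
    have hw2 : ∀ x ∈ g j, (w : F) * φ x ∈ A i := fun x hx => by
      have h1 : (w : F) = (∏ y ∈ (g j).erase x, v y : A i) * (v x : F) := by
        rw [← MulMemClass.coe_mul, Finset.prod_erase_mul _ _ hx]
      rw [h1, mul_assoc]
      exact (A i).mul_mem (Subtype.property _) (hv2 x (hgA x hx))
    have hex : ∀ x : F, ∃ m : ℕ, x ∈ g j → t i ^ m * C (w * φ x) ∈ B := fun x => by
      by_cases hx : x ∈ g j
      · obtain ⟨m, hm⟩ := hpow ⟨_, hw2 x hx⟩
        exact ⟨m, fun _ => hm⟩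
      · exact ⟨0, fun h => absurd h hx⟩
    choose m hm using hex
    obtain ⟨m0, hm0⟩ := hpow w
    let M := m0 + ∑ x ∈ g j, m x
    have hM : t i ^ M * C w ∈ B := by
      have := B.mul_mem (B.pow_mem (ht i) (∑ x ∈ g j, m x)) hm0
      rw [← mul_assoc, ← pow_add, add_comm] at this
      exact this
    have hz : (⟨_, hM⟩ : B) ∈ 𝔞 j := by
      intro x hx
      change t i ^ M * C w * C (φ x) ∈ B
      rw [mul_assoc, ← map_mul]
      have hle : m x ≤ M := (Finset.single_le_sum (fun _ _ => Nat.zero_le _) hx).trans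
        (Nat.le_add_left _ _)
      obtain ⟨d, hd⟩ := Nat.exists_eq_add_of_le hle
      rw [hd, add_comm, pow_add, mul_assoc]
      exact B.mul_mem (B.pow_mem (ht i) d) (hm x hx)
    have h0 := (hβ _).2 (hle (Ideal.mem_iSup_of_mem j hz))
    have h1 := hγ w M hM
    exact mul_ne_zero (pow_ne_zero _ hti) hw (h1.symm.trans h0)
  have h1 : (1 : B) ∈ ⨆ j, 𝔞 j := htop ▸ Submodule.mem_top
  obtain ⟨c, hc⟩ := (Submodule.mem_iSup_iff_exists_finsupp _ _).1 h1
  refine ⟨c, ?_, fun i => hc.1 i⟩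
  rw [← hc.2, Finsupp.sum_fintype _ _ (fun _ => rfl)]

/-- A ring with a universal partition of unity. -/
lemma exists_univ {K F ι : Type*} [Field K] [Field F] [Algebra K F] [Fintype ι] [Nonempty ι]
    (φ : F →ₐ[K] F) :
    ∃ (C : F →ₐ[K] MvPolynomial ι F) (t : ι → MvPolynomial ι F), Function.Injective C ∧
      ∑ i, t i = 1 ∧ ∀ t' : ι → MvPolynomial ι F, ∑ i, t' i = 1 →
        ∃ φ' : MvPolynomial ι F →ₐ[K] MvPolynomial ι F, (∀ x, φ' (C x) = C (φ x)) ∧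
          ∀ i, φ' (t i) = t' i := by
  classical
  obtain ⟨i0⟩ := ‹Nonempty ι›
  let C : F →ₐ[K] MvPolynomial ι F := IsScalarTower.toAlgHom K F (MvPolynomial ι F)
  have hC : ∀ x, C x = MvPolynomial.C x := fun x => rfl
  let t : ι → MvPolynomial ι F := fun i =>
    if i = i0 then 1 - ∑ j ∈ Finset.univ.erase i0, MvPolynomial.X j else MvPolynomial.X i
  have ht0 : t i0 = 1 - ∑ j ∈ Finset.univ.erase i0, MvPolynomial.X j := if_pos rfl
  have ht1 : ∀ i, i ≠ i0 → t i = MvPolynomial.X i := fun i hi => if_neg hi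
  refine ⟨C, t, MvPolynomial.C_injective _ _, ?_, fun t' ht' => ?_⟩
  · rw [← Finset.add_sum_erase _ _ (Finset.mem_univ i0), ht0,
      Finset.sum_congr rfl (fun i hi => ht1 i (Finset.ne_of_mem_erase hi))]
    ring
  · let ψ : MvPolynomial ι F →+* MvPolynomial ι F :=
      MvPolynomial.eval₂Hom ((C.comp φ : F →ₐ[K] MvPolynomial ι F) : F →+* MvPolynomial ι F) t'
    have hψC : ∀ x, ψ (C x) = C (φ x) := fun x => by
      rw [hC]; exact MvPolynomial.eval₂Hom_C _ _ _
    have hψX : ∀ i, ψ (MvPolynomial.X i) = t' i := fun i => MvPolynomial.eval₂Hom_X' _ _ _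
    refine ⟨{ ψ with commutes' := fun r => ?_ }, hψC, fun i => ?_⟩
    · have : algebraMap K (MvPolynomial ι F) r = C (algebraMap K F r) := (C.commutes r).symm
      change ψ _ = _
      rw [this, hψC, φ.commutes]
    · change ψ (t i) = t' i
      by_cases hi : i = i0
      · subst hi
        rw [ht0, map_sub, map_one, map_sum, Finset.sum_congr rfl (fun i _ => hψX i), ← ht',
          ← Finset.add_sum_erase _ _ (Finset.mem_univ i)]
        ring
      · rw [ht1 i hi, hψX]


theorem ttrick (p : ℕ) [Fact p.Prime] (K : Type*) [Field K] [Algebra (ZMod p) K]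
    [IsAlgClosure (ZMod p) K] {F ι : Type*} [Field F] [Algebra K F] [Fintype ι] [Nonempty ι]
    (φ : F →ₐ[K] F) (A : ι → Subalgebra K F) (hFG : ∀ i, (A i).FG)
    (hstar : ∀ i (q : Ideal (A i)), q.IsPrime → ∃ j, ∀ a ∈ A j, ∃ v : A i, v ∉ q ∧
      (v : F) * φ a ∈ A i) :
    ∃ i, ∀ s : A i, s ≠ 0 → ∃ b : ℕ, 1 ≤ b ∧ ∃ γ : ℕ → (A i →ₐ[K] K), (∀ n, γ n s ≠ 0) ∧
      (∀ n, γ (n + b) = γ n) ∧ ∀ n (l : ℕ) (a u : A i), (s : F) ^ l * φ a = u →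
        (γ n s) ^ l * γ (n + 1) a = γ n u := by
  classical
  choose g hg using hFG
  obtain ⟨C, t, hCinj, hsum, hext⟩ := exists_univ (ι := ι) φ
  let S : Finset (MvPolynomial ι F) := Finset.univ.image t ∪
    Finset.univ.biUnion (fun i => (g i).image (fun x => t i * C x))
  let B : Subalgebra K (MvPolynomial ι F) := Algebra.adjoin K S
  have hft : Algebra.FiniteType K B := B.fg_iff_finiteType.1 ⟨S, rfl⟩
  have ht : ∀ i, t i ∈ B := fun i => Algebra.subset_adjoin (Finset.mem_coe.2
    (Finset.mem_union_left _ (Finset.mem_image_of_mem _ (Finset.mem_univ i))))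
  have hB : ∀ i, ∀ x ∈ g i, t i * C x ∈ B := fun i x hx => Algebra.subset_adjoin
    (Finset.mem_coe.2 (Finset.mem_union_right _ (Finset.mem_biUnion.2
      ⟨i, Finset.mem_univ _, Finset.mem_image.2 ⟨x, hx, rfl⟩⟩)))
  obtain ⟨t', hsum', ht'⟩ := exists_partition φ A g hg hstar C t hsum B ht hB
  obtain ⟨ψ, hψC, hψt⟩ := hext (fun i => t' i) (by
    have := congrArg (Subtype.val : B → _) hsum'
    rw [AddSubmonoidClass.coe_finsetSum] at this
    exact this)
  have hψB : ∀ z ∈ B, ψ z ∈ B := by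
    intro z hz
    have : B ≤ B.comap ψ := by
      refine Algebra.adjoin_le ?_
      intro y hy
      change ψ y ∈ B
      rcases Finset.mem_union.1 (Finset.mem_coe.1 hy) with h | h
      · obtain ⟨i, -, rfl⟩ := Finset.mem_image.1 h
        rw [hψt]; exact (t' i).2
      · obtain ⟨i, -, h⟩ := Finset.mem_biUnion.1 h
        obtain ⟨x, hx, rfl⟩ := Finset.mem_image.1 h
        rw [map_mul, hψt, hψC]; exact ht' i x hx
    exact this hz
  let χ : B →ₐ[K] B := (ψ.comp B.val).codRestrict B (fun z => hψB z z.2)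
  have hχ : ∀ z : B, ((χ z : B) : MvPolynomial ι F) = ψ z := fun z => rfl
  have hχn : ∀ n (z : B), ((χ^[n] z : B) : MvPolynomial ι F) = (ψ ^ n) z := by
    intro n z
    rw [AlgHom.coe_pow]
    induction n with
    | zero => rfl
    | succ n ih => rw [Function.iterate_succ_apply', hχ, ih, Function.iterate_succ_apply']
  have hψCn : ∀ n x, (ψ ^ n) (C x) = C ((φ ^ n) x) := by
    intro n x
    rw [AlgHom.coe_pow, AlgHom.coe_pow]
    induction n with
    | zero => rfl
    | succ n ih => rw [Function.iterate_succ_apply', ih, hψC, Function.iterate_succ_apply']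
  obtain ⟨i, hi⟩ : ∃ i, ∀ n, (ψ ^ n) (t i) ≠ 0 := by
    by_contra! hall
    choose n hn using hall
    have h0 : ∀ i, (ψ ^ (∑ j, n j)) (t i) = 0 := fun i => by
      obtain ⟨d, hd⟩ := Nat.exists_eq_add_of_le
        (Finset.single_le_sum (f := n) (fun _ _ => Nat.zero_le _) (Finset.mem_univ i))
      rw [hd, add_comm, pow_add, AlgHom.mul_apply, hn, map_zero]
    have h1 := congrArg (ψ ^ (∑ j, n j)) hsum
    rw [map_sum, map_one, Finset.sum_eq_zero (fun i _ => h0 i)] at h1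
    exact zero_ne_one h1
  refine ⟨i, fun s hs => ?_⟩
  let c : A i →ₐ[K] MvPolynomial ι F := C.comp (A i).val
  have hc : ∀ a : A i, c a = C a := fun a => rfl
  have hpow : ∀ a : A i, ∃ m, t i ^ m * c a ∈ B := fun a =>
    exists_pow_mem B (t i) (ht i) C (g i) (hB i) a (by rw [hg]; exact a.2)
  obtain ⟨m, hm⟩ := hpow s
  let D : B := ⟨t i, ht i⟩ * ⟨_, hm⟩
  have hD : ∀ n, χ^[n] D ≠ 0 := by
    intro n h
    have h1 := hχn n D
    rw [h] at h1
    have h2 : (ψ ^ n) (t i * (t i ^ m * C s)) = 0 := h1.symm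
    rw [map_mul, map_mul, map_pow, hψCn] at h2
    have h3 : C ((φ ^ n) (s : F)) ≠ 0 := by
      rw [Ne, map_eq_zero_iff _ hCinj, map_eq_zero]
      exact fun h => hs (Subtype.ext h)
    exact mul_ne_zero (hi n) (mul_ne_zero (pow_ne_zero _ (hi n)) h3) h2
  obtain ⟨β, b, hb, hβb, hβD⟩ := coreK' p K χ D hD
  let β' : ℕ → (B →ₐ[K] K) := fun n => β.comp (χ ^ n)
  have hβ' : ∀ n z, β' n z = β (χ^[n] z) := fun n z => by
    change β ((χ ^ n) z) = _
    rw [AlgHom.coe_pow]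
  have hβs : ∀ n z, β' n (χ z) = β' (n + 1) z := fun n z => by
    rw [hβ', hβ', Function.iterate_succ_apply]
  have hβp : ∀ n z, β' (n + b) z = β' n z := fun n z => by
    rw [hβ', hβ', add_comm, Function.iterate_add_apply, hβb]
  have hDn : ∀ n, β' n ⟨t i, ht i⟩ ≠ 0 ∧ β' n ⟨_, hm⟩ ≠ 0 := fun n => by
    have := hβD n
    rw [← hβ', map_mul] at this
    exact ⟨left_ne_zero_of_mul this, right_ne_zero_of_mul this⟩
  have hγex := fun n => ext_loc B (t i) (ht i) (β' n) (hDn n).1 c hpow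
  choose γ hγ using hγex
  refine ⟨b, hb, γ, fun n h => ?_, fun n => ?_, fun n l a u hau => ?_⟩
  · apply (hDn n).2
    rw [hγ n s m hm, h, mul_zero]
  · ext a
    obtain ⟨e, he⟩ := hpow a
    have h1 := hγ (n + b) a e he
    rw [hβp, hβp, hγ n a e he] at h1
    exact (mul_left_cancel₀ (pow_ne_zero _ (hDn n).1) h1).symm
  · obtain ⟨e, he⟩ := hpow a
    obtain ⟨r, hr⟩ := hpow (s ^ l)
    obtain ⟨q, hq⟩ := hpow u
    have hr' : t i ^ (q + r) * c (s ^ l) ∈ B := by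
      rw [pow_add, mul_assoc]; exact B.mul_mem (B.pow_mem (ht i) q) hr
    have hq' : t i ^ (q + r) * c u ∈ B := by
      rw [add_comm, pow_add, mul_assoc]; exact B.mul_mem (B.pow_mem (ht i) r) hq
    have hrel : (⟨_, hr'⟩ : B) * χ ⟨_, he⟩ = χ ⟨t i, ht i⟩ ^ e * ⟨_, hq'⟩ := by
      apply Subtype.ext
      change t i ^ (q + r) * c (s ^ l) * ψ (t i ^ e * c a) =
        ψ (t i) ^ e * (t i ^ (q + r) * c u)
      have : c u = c (s ^ l) * ψ (c a) := by
        rw [hc, hc, hc, hψC, ← hau, ← map_mul]; rfl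
      rw [this, map_mul ψ, map_pow ψ]; ring
    have h1 := congrArg (β' n) hrel
    rw [map_mul (β' n), map_mul (β' n), map_pow (β' n), hβs, hβs, hγ n _ _ hr', hγ n _ _ hq', hγ (n + 1) _ _ he,
      map_pow (γ n)] at h1
    have h2 := pow_ne_zero (q + r) (hDn n).1
    have h3 := pow_ne_zero e (hDn (n + 1)).1
    apply mul_left_cancel₀ (mul_ne_zero h2 h3)
    rw [← mul_assoc] at h1
    linear_combination h1

section Geom
open AlgebraicGeometry CategoryTheory

lemma map_genericPoint {Y : Scheme} [IsIntegral Y] (f : Y ⟶ Y)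
    (hdom : Dense (Set.range f)) : f (genericPoint Y) = genericPoint Y := by
  apply ((genericPoint_spec Y).eq _).symm
  have h := (genericPoint_spec Y).image f.continuous
  rwa [Set.image_univ, hdom.closure_eq] at h

lemma exists_setup {Y : Scheme.{0}} [IsIntegral Y] (f : Y ⟶ Y) (hdom : Dense (Set.range f)) :
    ∃ (F : Type) (_ : Field F) (G : ∀ U : Y.Opens, genericPoint Y ∈ U → (Γ(Y, U) →+* F))
      (φ : F →+* F), (∀ U h, Function.Injective (G U h)) ∧
      (∀ U V hU hV (i : U ⟶ V) a, G U hU (Y.presheaf.map i.op a) = G V hV a) ∧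
      (∀ U V hU hV (e : U ≤ f ⁻¹ᵁ V) a, φ (G V hV a) = G U hU (f.appLE V U e a)) := by
  have hη := map_genericPoint f hdom
  let φ : Y.presheaf.stalk (genericPoint Y) ⟶ Y.presheaf.stalk (genericPoint Y) :=
    Y.presheaf.stalkSpecializes (specializes_of_eq hη) ≫ f.stalkMap (genericPoint Y)
  have hφ : ∀ U V hU hV (e : U ≤ f ⁻¹ᵁ V), Y.presheaf.germ V (genericPoint Y) hV ≫ φ =
      f.appLE V U e ≫ Y.presheaf.germ U (genericPoint Y) hU := by
    intro U V hU hV e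
    simp only [φ]
    rw [← Category.assoc, TopCat.Presheaf.germ_stalkSpecializes, Scheme.Hom.germ_stalkMap,
      Scheme.Hom.appLE, Category.assoc, TopCat.Presheaf.germ_res]
  refine ⟨Y.functionField, inferInstance, fun U h => (Y.presheaf.germ U (genericPoint Y) h).hom,
    φ.hom, fun U h => germ_injective_of_isIntegral Y _ h, ?_, ?_⟩
  · intro U V hU hV i a
    exact TopCat.Presheaf.germ_res_apply _ i _ hU a
  · intro U V hU hV e a
    exact congrArg (fun g => g.hom a) (hφ U V hU hV e)

end Geom

section Geom2
open AlgebraicGeometry CategoryTheory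

lemma exists_loc {Y : Scheme.{0}} {U : Y.Opens} (hU : IsAffineOpen U) (v : Γ(Y, U))
    (z : Γ(Y, Y.basicOpen v)) : ∃ (n : ℕ) (u : Γ(Y, U)),
      z * (Y.presheaf.map (homOfLE (Y.basicOpen_le v)).op v) ^ n =
        Y.presheaf.map (homOfLE (Y.basicOpen_le v)).op u := by
  have := hU.isLocalization_basicOpen v
  exact IsLocalization.Away.surj v z

lemma generic_mem {Y : Scheme.{0}} [IsIntegral Y] {U : Y.Opens} {y : Y} (hy : y ∈ U) :
    genericPoint Y ∈ U :=
  ((genericPoint_spec Y).mem_open_set_iff U.isOpen).mpr ⟨y, trivial, hy⟩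

lemma mem_basicOpen_fromSpec {Y : Scheme.{0}} {U : Y.Opens} (hU : IsAffineOpen U)
    (x : PrimeSpectrum Γ(Y, U)) (a : Γ(Y, U)) :
    hU.fromSpec x ∈ Y.basicOpen a ↔ a ∉ x.asIdeal := by
  have h := hU.fromSpec_preimage_basicOpen a
  have h2 : x ∈ hU.fromSpec ⁻¹ᵁ Y.basicOpen a ↔ x ∈ PrimeSpectrum.basicOpen a := by
    rw [h]; exact Iff.rfl
  exact h2

lemma fromSpec_mem {Y : Scheme.{0}} {U : Y.Opens} (hU : IsAffineOpen U)
    (x : PrimeSpectrum Γ(Y, U)) : hU.fromSpec x ∈ U := by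
  have h : hU.fromSpec x ∈ Set.range hU.fromSpec := ⟨x, rfl⟩
  rw [hU.range_fromSpec] at h
  exact h

lemma eq_of_basicOpen {Y : Scheme.{0}} {U : Y.Opens} (hU : IsAffineOpen U) (x y : Y)
    (hx : x ∈ U) (hy : y ∈ U) (h : ∀ a : Γ(Y, U), x ∈ Y.basicOpen a ↔ y ∈ Y.basicOpen a) :
    x = y := by
  apply Inseparable.eq
  rw [inseparable_iff_forall_isOpen]
  intro s hs
  constructor
  · intro hxs
    obtain ⟨a, ha1, ha2⟩ := hU.exists_basicOpen_le (V := ⟨s, hs⟩) ⟨x, hxs⟩ hx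
    exact ha1 ((h a).1 ha2)
  · intro hys
    obtain ⟨a, ha1, ha2⟩ := hU.exists_basicOpen_le (V := ⟨s, hs⟩) ⟨y, hys⟩ hy
    exact ha1 ((h a).2 ha2)

lemma isClosed_fromSpec {Y : Scheme.{0}} [JacobsonSpace Y] {U : Y.Opens} (hU : IsAffineOpen U)
    (x : PrimeSpectrum Γ(Y, U)) (hx : x.asIdeal.IsMaximal) :
    IsClosed ({hU.fromSpec x} : Set Y) := by
  apply isClosed_singleton_of_isLocallyClosed_singleton
  have h1 : IsClosed ({x} : Set (PrimeSpectrum Γ(Y, U))) :=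
    (PrimeSpectrum.isClosed_singleton_iff_isMaximal x).2 hx
  have h2 : IsLocallyClosed (hU.fromSpec '' ({x} : Set (Spec Γ(Y, U)))) :=
    (IsClosed.isLocallyClosed h1).image hU.fromSpec.isOpenEmbedding.isInducing
      hU.fromSpec.isOpenEmbedding.isOpen_range.isLocallyClosed
  have h3 : hU.fromSpec '' ({x} : Set (Spec Γ(Y, U))) = {hU.fromSpec x} := Set.image_singleton
  exact h3 ▸ h2

lemma exists_cover (Y : Scheme.{0}) [CompactSpace Y] :
    ∃ s : Finset Y.Opens, (∀ U ∈ s, IsAffineOpen U) ∧ ∀ y : Y, ∃ U ∈ s, y ∈ U := by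
  classical
  obtain ⟨t, ht⟩ := isCompact_univ.elim_finite_subcover
    (fun U : Y.affineOpens => ((U : Y.Opens) : Set Y)) (fun U => (U : Y.Opens).isOpen) (by
      intro y _
      have : y ∈ ((⨆ i : Y.affineOpens, (i : Y.Opens) : Y.Opens)) := by
        rw [iSup_affineOpens_eq_top]; trivial
      obtain ⟨i, hi⟩ := TopologicalSpace.Opens.mem_iSup.1 this
      exact Set.mem_iUnion.2 ⟨i, hi⟩)
  refine ⟨t.image (fun U : Y.affineOpens => (U : Y.Opens)), ?_, fun y => ?_⟩
  · intro U hU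
    obtain ⟨V, -, rfl⟩ := Finset.mem_image.1 hU
    exact V.2
  · obtain ⟨U, hU, hy⟩ := Set.mem_iUnion₂.1 (ht (Set.mem_univ y))
    exact ⟨U, Finset.mem_image_of_mem _ hU, hy⟩

theorem main (p : ℕ) [Fact p.Prime] (K : Type) [Field K]
    [Algebra (ZMod p) K] [IsAlgClosure (ZMod p) K]
    (Y : Scheme.{0}) [IsIntegral Y]
    (struct : Y ⟶ Spec (CommRingCat.of K))
    [LocallyOfFiniteType struct] [QuasiCompact struct]
    (f : Y ⟶ Y) (hover : f ≫ struct = struct)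
    (hdom : Dense (Set.range f)) :
    Dense {y : Y | IsClosed ({y} : Set Y) ∧ ∃ b : ℕ, 1 ≤ b ∧ (f)^[b] y = y} := by
  classical
  have hη := map_genericPoint f hdom
  have : CompactSpace Y := QuasiCompact.compactSpace_of_compactSpace struct
  have : JacobsonSpace Y := LocallyOfFiniteType.jacobsonSpace struct
  obtain ⟨F, _, G, φ, hGinj, hGres, hφG⟩ := exists_setup f hdom
  obtain ⟨cov, hcov1, hcov2⟩ := exists_cover Y
  let κ : ∀ U : Y.Opens, K →+* Γ(Y, U) := fun U =>
    (struct.appLE ⊤ U le_top).hom.comp (Scheme.ΓSpecIso (CommRingCat.of K)).inv.hom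
  have hκres : ∀ U V (i : U ⟶ V) r, Y.presheaf.map i.op (κ V r) = κ U r := by
    intro U V i r
    have := struct.appLE_map (U := ⊤) (V := V) (V' := U) le_top i.op
    exact congrArg (fun g => g.hom ((Scheme.ΓSpecIso (CommRingCat.of K)).inv.hom r)) this
  have hκf : ∀ U V (e : U ≤ f ⁻¹ᵁ V) r, f.appLE V U e (κ V r) = κ U r := by
    intro U V e r
    have h1 := Scheme.Hom.appLE_comp_appLE f struct ⊤ V U le_top e
    have h2 : ∀ (g : Y ⟶ Spec (CommRingCat.of K)) (hg : g = struct) (h : U ≤ g ⁻¹ᵁ ⊤),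
        g.appLE ⊤ U h = struct.appLE ⊤ U le_top := by
      rintro g rfl h; rfl
    rw [h2 _ hover] at h1
    exact congrArg (fun g => g.hom ((Scheme.ΓSpecIso (CommRingCat.of K)).inv.hom r)) h1
  have hκft : ∀ U, IsAffineOpen U → (κ U).FiniteType := by
    intro U hU
    refine RingHom.FiniteType.comp (struct.finiteType_appLE (isAffineOpen_top _) hU le_top) ?_
    exact RingHom.FiniteType.of_surjective _
      (ConcreteCategory.bijective_of_isIso (Scheme.ΓSpecIso (CommRingCat.of K)).inv).2
  let _ : Algebra K F := ((G ⊤ trivial).comp (κ ⊤)).toAlgebra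
  have halg : ∀ U hU r, algebraMap K F r = G U hU (κ U r) := by
    intro U hU r
    change G ⊤ trivial (κ ⊤ r) = _
    rw [← hκres U ⊤ (homOfLE le_top) r, hGres U ⊤ hU trivial]
  let Φ : F →ₐ[K] F := { φ with
    commutes' := fun r => by
      change φ (algebraMap K F r) = _
      rw [halg ⊤ trivial r, hφG ⊤ ⊤ trivial trivial le_top, hκf ⊤ ⊤ le_top] }
  have hΦ : ∀ x, Φ x = φ x := fun x => rfl
  let ι := {U : Y.Opens // U ∈ cov ∧ genericPoint Y ∈ U}
  have : Fintype ι := Fintype.subtype (cov.filter (fun U => genericPoint Y ∈ U)) (by simp)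
  have : Nonempty ι := by
    obtain ⟨U, hU, h⟩ := hcov2 (genericPoint Y)
    exact ⟨⟨U, hU, h⟩⟩
  have haff : ∀ i : ι, IsAffineOpen i.1 := fun i => hcov1 _ i.2.1
  let A : ι → Subalgebra K F := fun i =>
    { (G i.1 i.2.2).range with
      algebraMap_mem' := fun r => ⟨κ i.1 r, (halg _ _ r).symm⟩ }
  have hA : ∀ i x, x ∈ A i ↔ ∃ a, G i.1 i.2.2 a = x := fun i x => Iff.rfl
  have hFG : ∀ i, (A i).FG := by
    intro i
    rw [Subalgebra.fg_iff_finiteType]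
    let _ : Algebra K Γ(Y, i.1) := (κ i.1).toAlgebra
    have : Algebra.FiniteType K Γ(Y, i.1) := hκft _ (haff i)
    let g : Γ(Y, i.1) →ₐ[K] A i :=
      { (G i.1 i.2.2).codRestrict (A i).toSubring (fun a => ⟨a, rfl⟩) with
        commutes' := fun r => Subtype.ext (halg _ _ r).symm }
    refine Algebra.FiniteType.of_surjective g ?_
    rintro ⟨x, a, rfl⟩
    exact ⟨a, rfl⟩
  let ga : ∀ i : ι, Γ(Y, i.1) →+* A i := fun i =>
    (G i.1 i.2.2).codRestrict (A i).toSubring (fun a => ⟨a, rfl⟩)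
  have hga : ∀ i a, ((ga i a : A i) : F) = G i.1 i.2.2 a := fun i a => rfl
  have hgas : ∀ i, Function.Surjective (ga i) := by
    rintro i ⟨x, a, rfl⟩
    exact ⟨a, rfl⟩
  have hrel : ∀ (i j : ι) (v : Γ(Y, i.1)) (e : Y.basicOpen v ≤ f ⁻¹ᵁ j.1)
      (hv : genericPoint Y ∈ Y.basicOpen v) (a : Γ(Y, j.1)), ∃ (n : ℕ) (u : Γ(Y, i.1)),
      f.appLE j.1 (Y.basicOpen v) e a *
        (Y.presheaf.map (homOfLE (Y.basicOpen_le v)).op v) ^ n =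
          Y.presheaf.map (homOfLE (Y.basicOpen_le v)).op u ∧
      (ga i v : F) ^ n * Φ (ga j a) = ga i u := by
    intro i j v e hv a
    obtain ⟨n, u, h⟩ := exists_loc (haff i) v (f.appLE j.1 (Y.basicOpen v) e a)
    refine ⟨n, u, h, ?_⟩
    have h2 := congrArg (G _ hv) h
    rw [map_mul, map_pow, hGres _ _ hv i.2.2, hGres _ _ hv i.2.2, ← hφG _ _ hv j.2.2] at h2
    rw [hga, hga, hga, hΦ, ← h2, mul_comm]
  have hstar : ∀ i (q : Ideal (A i)), q.IsPrime → ∃ j, ∀ a ∈ A j, ∃ v : A i, v ∉ q ∧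
      (v : F) * Φ a ∈ A i := by
    intro i q hq
    let x : PrimeSpectrum Γ(Y, i.1) := ⟨q.comap (ga i), hq.comap _⟩
    let y : Y := (haff i).fromSpec x
    obtain ⟨V, hV, hyV⟩ := hcov2 (f y)
    have hηV : genericPoint Y ∈ V := generic_mem hyV
    let j : ι := ⟨V, hV, hηV⟩
    refine ⟨j, ?_⟩
    rintro _ ⟨a, rfl⟩
    obtain ⟨v, hv1, hv2⟩ := (haff i).exists_basicOpen_le (V := f ⁻¹ᵁ V) ⟨y, hyV⟩
      (fromSpec_mem _ x)
    have hvq := (mem_basicOpen_fromSpec (haff i) x v).1 hv2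
    obtain ⟨n, u, -, h⟩ := hrel i j v hv1 (generic_mem hv2) a
    refine ⟨ga i v ^ n, fun h0 => hvq (hq.mem_of_pow_mem n h0), ?_⟩
    have h' : ((ga i v ^ n : A i) : F) * Φ (ga j a) = ga i u := h
    exact h' ▸ (ga i u).2
  obtain ⟨i, hi⟩ := ttrick p K Φ A hFG hstar
  rw [dense_iff_inter_open]
  rintro O hO ⟨o, ho⟩
  let W : Y.Opens := ⟨O, hO⟩ ⊓ f ⁻¹ᵁ i.1
  have hηW : genericPoint Y ∈ W := by
    refine ⟨generic_mem (U := ⟨O, hO⟩) ho, ?_⟩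
    change f (genericPoint Y) ∈ i.1
    rw [hη]
    exact i.2.2
  obtain ⟨s, hs1, hs2⟩ := (haff i).exists_basicOpen_le (V := W) ⟨_, hηW⟩ i.2.2
  have hs1' : Y.basicOpen s ≤ f ⁻¹ᵁ i.1 := hs1.trans inf_le_right
  have hs0 : ga i s ≠ 0 := by
    intro h
    have h1 : G i.1 i.2.2 s = 0 := congrArg Subtype.val h
    have h2 : s = 0 := hGinj _ _ (h1.trans (map_zero _).symm)
    rw [h2, Scheme.basicOpen_zero] at hs2
    exact hs2
  obtain ⟨b, hb, γ, hγs, hγb, hγr⟩ := hi (ga i s) hs0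
  let x : ℕ → PrimeSpectrum Γ(Y, i.1) := fun n =>
    ⟨RingHom.ker ((γ n : A i →+* K).comp (ga i)), RingHom.ker_isPrime _⟩
  let y : ℕ → Y := fun n => (haff i).fromSpec (x n)
  have hyU : ∀ n, y n ∈ i.1 := fun n => fromSpec_mem _ _
  have hy : ∀ n a, y n ∈ Y.basicOpen a ↔ γ n (ga i a) ≠ 0 := fun n a =>
    mem_basicOpen_fromSpec (haff i) (x n) a
  have hys : ∀ n, y n ∈ Y.basicOpen s := fun n => (hy n s).2 (hγs n)
  have hyf : ∀ n, f (y n) = y (n + 1) := by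
    intro n
    refine eq_of_basicOpen (haff i) _ _ (hs1' (hys n)) (hyU _) fun a => ?_
    obtain ⟨l, u, hu1, hu2⟩ := hrel i i s hs1' hs2 a
    have h1 := hγr n l (ga i a) (ga i u) hu2
    have h2 := congrArg (fun z => y n ∈ Y.basicOpen z) hu1
    rw [hy (n + 1)]
    have h3 : y n ∈ Y.basicOpen u ↔ f (y n) ∈ Y.basicOpen a := by
      have h4 : y n ∈ Y.basicOpen (f.appLE i.1 (Y.basicOpen s) hs1' a *
        (Y.presheaf.map (homOfLE (Y.basicOpen_le s)).op s) ^ l) ↔ f (y n) ∈ Y.basicOpen a := by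
        rw [Scheme.basicOpen_mul, Scheme.basicOpen_appLE]
        have h5 : y n ∈ Y.basicOpen ((Y.presheaf.map (homOfLE (Y.basicOpen_le s)).op s) ^ l) := by
          rcases Nat.eq_zero_or_pos l with h0 | h0
          · rw [h0, pow_zero, Scheme.basicOpen_of_isUnit _ isUnit_one]; exact hys n
          · rw [Scheme.basicOpen_pow _ _ h0, Scheme.basicOpen_res]; exact ⟨hys n, hys n⟩
        exact ⟨fun h => h.1.2, fun h => ⟨⟨hys n, h⟩, h5⟩⟩
      rw [← h4, hu1, Scheme.basicOpen_res]
      exact ⟨fun h => ⟨hys n, h⟩, fun h => h.2⟩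
    rw [← h3, hy, ← h1]
    exact (mul_ne_zero_iff_left (pow_ne_zero _ (hγs n))).trans Iff.rfl
  have hyper : ∀ n, (f)^[n] (y 0) = y n := by
    intro n
    induction n with
    | zero => rfl
    | succ n ih => rw [Function.iterate_succ_apply', ih, hyf]
  refine ⟨y 0, (hs1 (hys 0)).1, ?_, b, hb, ?_⟩
  · refine isClosed_fromSpec (haff i) (x 0) ?_
    refine RingHom.ker_isMaximal_of_surjective _ ?_
    intro r
    obtain ⟨a, ha⟩ := hgas i (algebraMap K (A i) r)
    refine ⟨a, ?_⟩
    change γ 0 (ga i a) = r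
    rw [ha, (γ 0).commutes]; rfl
  · rw [hyper]
    have : x b = x 0 := by
      have := hγb 0
      rw [zero_add] at this
      simp only [x, this]
    simp only [y, this]

end Geom2

end PerDense

open AlgebraicGeometry CategoryTheory

/-- Let `K` be an algebraic closure of `𝔽_p`, let `Y` be an integral scheme
of finite type over `K` (structure morphism `struct : Y ⟶ Spec K`, locally of finite type and
quasi-compact), and let `f : Y ⟶ Y` be a dominant morphism of schemes over `K`.  Then the set
of `f`-periodic closed points `{y : y closed, f^b(y) = y for some b ≥ 1}` is dense in `Y`. -/
theorem dense_periodic_closed_points_of_dominant_self_map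
    (p : ℕ) [Fact p.Prime] (K : Type) [Field K]
    [Algebra (ZMod p) K] [IsAlgClosure (ZMod p) K]
    (Y : Scheme) [IsIntegral Y]
    (struct : Y ⟶ Spec (CommRingCat.of K))
    [LocallyOfFiniteType struct] [QuasiCompact struct]
    (f : Y ⟶ Y) (hover : f ≫ struct = struct)
    (hdom : Dense (Set.range f.base)) :
    Dense {y : Y | IsClosed ({y} : Set Y) ∧ ∃ b : ℕ, 1 ≤ b ∧ (⇑f.base)^[b] y = y} := by
  exact PerDense.main p K Y struct f hover hdom
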